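/- arXiv:1905.00368 — 2 statements merged into one kernel-verified Lean document; each statement's English description precedes it below -/
import Mathlib

section
/- Let μ and (μ_n)_n be elements of 𝒫_p(X̄). Then μ_n → μ in the topology induced by AW_p (built from ρ) if and only if both: (i) μ_n → μ in the topology induced by the adapted distance AW built from the bounded compatible complete metric min(1,ρ) in place of ρ, and (ii) the p-th moments converge, i.e. ∫ ρ̄(x̄_0, x)^p dμ_n(x) → ∫ ρ̄(x̄_0, x)^p dμ(x) for some (equivalently every) base point x̄_0 ∈ X̄. -/
open MeasureTheory ProbabilityTheory ENNReal Filter Topology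

noncomputable section

namespace AWPaper

/-! ### Generic constructions -/

variable {α β : Type*}

/-- The set of couplings of two measures. -/
def Cpl [MeasurableSpace α] [MeasurableSpace β] (μ : Measure α) (ν : Measure β) :
    Set (Measure (α × β)) :=
  {π | π.map Prod.fst = μ ∧ π.map Prod.snd = ν}

/-- The `p`-Wasserstein distance (with values in `ℝ≥0∞`) associated to an
`ℝ≥0∞`-valued distance function `d`. -/
def Wp [MeasurableSpace α] (p : ℝ) (d : α → α → ℝ≥0∞) (μ ν : Measure α) : ℝ≥0∞ :=
  ⨅ π ∈ Cpl μ ν, (∫⁻ z, d z.1 z.2 ^ p ∂π) ^ (1 / p)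

/-- The topology generated by the open balls of an `ℝ≥0∞`-valued distance
function.  For a genuine metric this is the metric topology. -/
def ballTop (d : α → α → ℝ≥0∞) : TopologicalSpace α :=
  TopologicalSpace.generateFrom {s | ∃ x ε, 0 < ε ∧ s = {y | d x y < ε}}

/-- The product distance of two `ℝ≥0∞`-valued distances, `ℓ^p`-style. -/
def prodDist (p : ℝ) (d₁ : α → α → ℝ≥0∞) (d₂ : β → β → ℝ≥0∞) :
    α × β → α × β → ℝ≥0∞ :=
  fun u v => (d₁ u.1 v.1 ^ p + d₂ u.2 v.2 ^ p) ^ (1 / p)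

/-- Membership in the `p`-Wasserstein space: a probability measure with finite
`p`-th moment (w.r.t. the distance function `d`). -/
def MemPp [MeasurableSpace α] (p : ℝ) (d : α → α → ℝ≥0∞) (μ : Measure α) : Prop :=
  IsProbabilityMeasure μ ∧ ∃ x₀, ∫⁻ x, d x₀ x ^ p ∂μ ≠ ∞

/-- The weak topology on measures induced by integration of bounded continuous
functions, for a given topology `τ` on the base space. -/
def weakTop [MeasurableSpace α] (τ : TopologicalSpace α) : TopologicalSpace (Measure α) :=
  TopologicalSpace.induced
    (fun μ => fun f : @BoundedContinuousFunction α ℝ τ _ => ∫ x, f x ∂μ)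
    Pi.topologicalSpace

/-- The product topology built from two explicitly given topologies. -/
def prodTop (τ₁ : TopologicalSpace α) (τ₂ : TopologicalSpace β) : TopologicalSpace (α × β) :=
  TopologicalSpace.induced Prod.fst τ₁ ⊓ TopologicalSpace.induced Prod.snd τ₂

/-- An everywhere-defined version of the disintegration kernel: it agrees with
`Measure.condKernel` on finite measures. -/
def condK [MeasurableSpace α] [MeasurableSpace β] [StandardBorelSpace β] [Nonempty β]
    (ρ : Measure (α × β)) : Kernel α β :=
  letI := Classical.dec (IsFiniteMeasure ρ)
  if h : IsFiniteMeasure ρ then @Measure.condKernel α β _ _ _ _ ρ h else 0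

/-- The disintegration map `𝒫(A × B) → 𝒫(A × 𝒫(B))`. -/
def disint [MeasurableSpace α] [MeasurableSpace β] [StandardBorelSpace β] [Nonempty β]
    (μ : Measure (α × β)) : Measure (α × Measure β) :=
  μ.map (fun z => (z.1, condK μ z.1))

/-- The intensity ("und") map `𝒫(A × 𝒫(B)) → 𝒫(A × B)`. -/
def und [MeasurableSpace α] [MeasurableSpace β] (μ : Measure (α × Measure β)) :
    Measure (α × β) :=
  μ.bind (fun z => (Measure.dirac z.1).prod z.2)

/-! ### Path spaces -/

variable {X : Type*} [MeasurableSpace X]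

/-- The path-space distance `ρ̄((x_t),(y_t)) = (∑ ρ(x_t,y_t)^p)^{1/p}`. -/
def pathDist (p : ℝ) (d : X → X → ℝ≥0∞) {N : ℕ} :
    (Fin N → X) → (Fin N → X) → ℝ≥0∞ :=
  fun x y => (∑ t, d (x t) (y t) ^ p) ^ (1 / p)

/-- The first `t` coordinates of a path. -/
def restr {N : ℕ} (t : ℕ) (h : t ≤ N) (x : Fin N → X) : Fin t → X :=
  fun s => x (Fin.castLE h s)

/-- The last `N - t` coordinates of a path. -/
def tailr {N : ℕ} (t : ℕ) (h : t ≤ N) (x : Fin N → X) : Fin (N - t) → X :=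
  fun s => x ⟨t + s.1, by have := s.2; omega⟩

/-- A coupling `π` of two path measures is causal: for every `t` and Borel
`A ⊆ 𝒳^t`, `π((Y_1,…,Y_t) ∈ A | X) = π((Y_1,…,Y_t) ∈ A | X_1,…,X_t)` a.s. -/
def Causal {N : ℕ} (π : Measure ((Fin N → X) × (Fin N → X))) : Prop :=
  ∀ (t : ℕ) (h : t ≤ N) (A : Set (Fin t → X)), MeasurableSet A →
    (π[fun z => A.indicator (fun _ => (1 : ℝ)) (restr t h z.2) |
        MeasurableSpace.comap Prod.fst inferInstance])
      =ᵐ[π]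
    (π[fun z => A.indicator (fun _ => (1 : ℝ)) (restr t h z.2) |
        MeasurableSpace.comap (fun z => restr t h z.1) inferInstance])

/-- Bicausal couplings. -/
def Bicausal {N : ℕ} (π : Measure ((Fin N → X) × (Fin N → X))) : Prop :=
  Causal π ∧ Causal (π.map Prod.swap)

/-- The causal Wasserstein "distance" `CW_p`. -/
def CW (p : ℝ) (d : X → X → ℝ≥0∞) {N : ℕ} (μ ν : Measure (Fin N → X)) : ℝ≥0∞ :=
  ⨅ π ∈ {π ∈ Cpl μ ν | Causal π}, (∫⁻ z, pathDist p d z.1 z.2 ^ p ∂π) ^ (1 / p)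

/-- The symmetrized causal Wasserstein distance `SCW_p`. -/
def SCW (p : ℝ) (d : X → X → ℝ≥0∞) {N : ℕ} (μ ν : Measure (Fin N → X)) : ℝ≥0∞ :=
  max (CW p d μ ν) (CW p d ν μ)

/-- The adapted (nested, bicausal) Wasserstein distance `AW_p`. -/
def AW (p : ℝ) (d : X → X → ℝ≥0∞) {N : ℕ} (μ ν : Measure (Fin N → X)) : ℝ≥0∞ :=
  ⨅ π ∈ {π ∈ Cpl μ ν | Bicausal π}, (∫⁻ z, pathDist p d z.1 z.2 ^ p ∂π) ^ (1 / p)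

/-! ### Nested spaces (Pflug's nested distributions / Vershik's iterated spaces) -/

/-- A measurable space together with an `ℝ≥0∞`-valued distance. -/
structure QMS : Type 1 where
  carrier : Type
  inst : MeasurableSpace carrier
  dist : carrier → carrier → ℝ≥0∞

/-- The nested sequence of spaces: `nest X _ d p 0 = 𝒳` (this is `𝒳_N`), and
`nest X _ d p (k+1) = 𝒳 × 𝒫(nest X _ d p k)` with the nested distance
`D = (ρ^p + 𝒲_p^p)^{1/p}`.  Thus `𝒳_1` (for `N = k+1` time points) is
`nest X _ d p k`. -/
def nest (X : Type) (mX : MeasurableSpace X) (d : X → X → ℝ≥0∞) (p : ℝ) : ℕ → QMS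
  | 0 => ⟨X, mX, d⟩
  | (k + 1) =>
    let Q := nest X mX d p k
    ⟨X × @Measure Q.carrier Q.inst,
      @Prod.instMeasurableSpace _ _ mX (@Measure.instMeasurableSpace _ Q.inst),
      fun a b => (d a.1 b.1 ^ p + (@Wp _ Q.inst p Q.dist a.2 b.2) ^ p) ^ (1 / p)⟩

section NMapSec

variable (Y : Type) [mY : MeasurableSpace Y] [TopologicalSpace Y] [PolishSpace Y]
  [BorelSpace Y] [Nonempty Y]

/-- The map `𝒩` sending the law of a process with `k+1` time steps to the
corresponding nested distribution, via iterated regular conditional laws. -/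
def NMap (d : Y → Y → ℝ≥0∞) (p : ℝ) :
    ∀ k : ℕ, Measure (Fin (k + 1) → Y) →
      @Measure (nest Y mY d p k).carrier (nest Y mY d p k).inst
  | 0, μ =>
    letI : MeasurableSpace (nest Y mY d p 0).carrier := (nest Y mY d p 0).inst
    μ.map (fun x => x 0)
  | (k + 1), μ =>
    letI : MeasurableSpace (nest Y mY d p k).carrier := (nest Y mY d p k).inst
    letI : MeasurableSpace (nest Y mY d p (k + 1)).carrier := (nest Y mY d p (k + 1)).inst
    (μ.map (fun x => x 0)).map
      (fun x₀ => (x₀, NMap d p k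
        ((condK (μ.map (fun x => (x 0, fun s : Fin (k + 1) => x s.succ)))) x₀)))

end NMapSec

section PathStructures

variable {Y : Type*} [mY : MeasurableSpace Y]

/-- A process `L` is adapted: `L t` depends only on the first `t+1` coordinates. -/
def AdaptedProc {N : ℕ} (L : Fin N → (Fin N → Y) → ℝ) : Prop :=
  ∀ (t : Fin N) (x y : Fin N → Y), (∀ s : Fin N, s ≤ t → x s = y s) → L t x = L t y

/-- `τ` is a stopping time of the canonical filtration on the path space. -/
def IsStopTime {N : ℕ} (τ : (Fin N → Y) → Fin N) : Prop :=
  ∀ t : Fin N,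
    MeasurableSet[MeasurableSpace.comap (restr (X := Y) (t.1 + 1) t.2) inferInstance]
      {x | τ x = t}

/-- The optimal stopping value `v^L(μ)`. -/
def stopVal {N : ℕ} (L : Fin N → (Fin N → Y) → ℝ) (μ : Measure (Fin N → Y)) : ℝ :=
  ⨅ τ : {τ : (Fin N → Y) → Fin N // IsStopTime τ}, ∫ x, L (τ.1 x) x ∂μ

variable [TopologicalSpace Y]

/-- `AC(X̄)`: adapted processes which are continuous and bounded. -/
def ACbdd {N : ℕ} (L : Fin N → (Fin N → Y) → ℝ) : Prop :=
  (∀ t, Continuous (L t)) ∧ AdaptedProc L ∧ ∃ C : ℝ, ∀ t x, |L t x| ≤ C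

/-- `AC_p(X̄)`: adapted continuous processes of growth of order `p`. -/
def ACp (p : ℝ) (d : Y → Y → ℝ≥0∞) {N : ℕ} (L : Fin N → (Fin N → Y) → ℝ) : Prop :=
  (∀ t, Continuous (L t)) ∧ AdaptedProc L ∧
    ∃ (C : ℝ) (x₀ : Fin N → Y), ∀ t x, |L t x| ≤ C * (1 + ((pathDist p d x₀ x) ^ p).toReal)

/-- The optimal stopping topology (weak version, bounded continuous rewards). -/
def stopTopW (N : ℕ) : TopologicalSpace (Measure (Fin N → Y)) :=
  ⨅ L : {L : Fin N → (Fin N → Y) → ℝ // ACbdd L},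
    TopologicalSpace.induced (stopVal L.1) inferInstance

/-- The `𝒲_p`-optimal stopping topology. -/
def stopTopWp (p : ℝ) (d : Y → Y → ℝ≥0∞) (N : ℕ) :
    TopologicalSpace (Measure (Fin N → Y)) :=
  ⨅ L : {L : Fin N → (Fin N → Y) → ℝ // ACp p d L},
    TopologicalSpace.induced (stopVal L.1) inferInstance

variable [PolishSpace Y] [BorelSpace Y] [Nonempty Y]

/-- Hellwig's map `I_t`, sending `μ` to the joint law of the first `t`
coordinates together with the conditional law of the remaining coordinates. -/
def infoMap (N t : ℕ) (h : t ≤ N) (μ : Measure (Fin N → Y)) :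
    Measure ((Fin t → Y) × Measure (Fin (N - t) → Y)) :=
  μ.map (fun x => (restr t h x,
    condK (μ.map (fun y => (restr t h y, tailr t h y))) (restr t h x)))

/-- Hellwig's information topology (weak version). -/
def infoTopW (N : ℕ) : TopologicalSpace (Measure (Fin N → Y)) :=
  ⨅ (t : ℕ) (_ : 1 ≤ t) (h : t ≤ N - 1),
    TopologicalSpace.induced (infoMap N t (le_trans h (Nat.sub_le N 1)))
      (weakTop (prodTop Pi.topologicalSpace (weakTop Pi.topologicalSpace)))

/-- The `𝒲_p`-information topology. -/
def infoTopWp (p : ℝ) (d : Y → Y → ℝ≥0∞) (N : ℕ) :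
    TopologicalSpace (Measure (Fin N → Y)) :=
  ⨅ (t : ℕ) (_ : 1 ≤ t) (h : t ≤ N - 1),
    TopologicalSpace.induced (infoMap N t (le_trans h (Nat.sub_le N 1)))
      (ballTop (Wp p (prodDist p (pathDist p d) (Wp p (pathDist p d)))))

/-- Aldous' prediction process `Z_t^μ` (as a function of the path). -/
def predict (N : ℕ) (μ : Measure (Fin N → Y)) (t : ℕ) (h : t ≤ N) :
    (Fin N → Y) → Measure (Fin N → Y) :=
  fun x => condK (μ.map (fun y => (restr t h y, y))) (restr t h x)

/-- Aldous' map `E`, sending `μ` to the joint law of the path together with its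
prediction process. -/
def aldousMap (N : ℕ) (μ : Measure (Fin N → Y)) :
    Measure ((Fin N → Y) × (Fin (N + 1) → Measure (Fin N → Y))) :=
  μ.map (fun x =>
    (x, fun t : Fin (N + 1) => predict N μ t.1 (Nat.lt_succ_iff.mp t.2) x))

/-- Aldous' extended weak topology. -/
def aldousTopW (N : ℕ) : TopologicalSpace (Measure (Fin N → Y)) :=
  TopologicalSpace.induced (aldousMap N)
    (weakTop (prodTop Pi.topologicalSpace
      (@Pi.topologicalSpace (Fin (N + 1)) (fun _ => Measure (Fin N → Y))
        (fun _ => weakTop Pi.topologicalSpace))))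

/-- The extended `𝒲_p`-topology. -/
def aldousTopWp (p : ℝ) (d : Y → Y → ℝ≥0∞) (N : ℕ) :
    TopologicalSpace (Measure (Fin N → Y)) :=
  TopologicalSpace.induced (aldousMap N)
    (ballTop (Wp p (prodDist p (pathDist p d)
      (fun Z Z' : Fin (N + 1) → Measure (Fin N → Y) =>
        (∑ t, Wp p (pathDist p d) (Z t) (Z' t) ^ p) ^ (1 / p)))))

end PathStructures

/-! ### The lifted two-time-point space `𝒳₁ × 𝒫_p(𝒳₂)` -/

section Lifted

variable {A B : Type*} [MeasurableSpace A] [MeasurableSpace B]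

/-- The nested distance on `𝒳₁ × 𝒫_p(𝒳₂)`. -/
def liftDist (p : ℝ) (dA : A → A → ℝ≥0∞) (dB : B → B → ℝ≥0∞) :
    (A × Measure B) → (A × Measure B) → ℝ≥0∞ :=
  fun u v => (dA u.1 v.1 ^ p + Wp p dB u.2 v.2 ^ p) ^ (1 / p)

/-- `η` is a version of the measure-valued conditional expectation
`E_γ[X̂₂ | Y⃗]` (i.e. the barycenter of a regular conditional law of `X̂₂`
given `Y⃗ = (Y₁, Ŷ₂)`). -/
def IsCondBar (γ : Measure ((A × Measure B) × (A × Measure B)))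
    (η : (A × Measure B) × (A × Measure B) → Measure B) : Prop :=
  (∃ g : (A × Measure B) → Measure B, Measurable g ∧ ∀ z, η z = g z.2) ∧
  (∀ z, IsProbabilityMeasure (η z)) ∧
  ∀ S : Set (A × Measure B), MeasurableSet S → ∀ E : Set B, MeasurableSet E →
    ∫⁻ z in {z | z.2 ∈ S}, η z E ∂γ = ∫⁻ z in {z | z.2 ∈ S}, z.1.2 E ∂γ

/-- `AW̄_p`, the `p`-Wasserstein distance on `𝒫_p(𝒳₁ × 𝒫_p(𝒳₂))`. -/
def AWbar (p : ℝ) (dA : A → A → ℝ≥0∞) (dB : B → B → ℝ≥0∞)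
    (μ ν : Measure (A × Measure B)) : ℝ≥0∞ :=
  Wp p (liftDist p dA dB) μ ν

/-- `CW̄_p`, the lifted causal Wasserstein "distance". -/
def CWbar (p : ℝ) (dA : A → A → ℝ≥0∞) (dB : B → B → ℝ≥0∞)
    (μ ν : Measure (A × Measure B)) : ℝ≥0∞ :=
  ⨅ γ ∈ Cpl μ ν, ⨅ η ∈ {η | IsCondBar γ η},
    (∫⁻ z, (dA z.1.1 z.2.1 ^ p + Wp p dB (η z) z.2.2 ^ p) ∂γ) ^ (1 / p)

/-- `SCW̄_p`, the symmetrization of `CW̄_p`. -/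
def SCWbar (p : ℝ) (dA : A → A → ℝ≥0∞) (dB : B → B → ℝ≥0∞)
    (μ ν : Measure (A × Measure B)) : ℝ≥0∞ :=
  max (CWbar p dA dB μ ν) (CWbar p dA dB ν μ)

/-- Membership in `𝒫_p(𝒳₁ × 𝒫_p(𝒳₂))`: a probability measure, concentrated on
`𝒳₁ × 𝒫_p(𝒳₂)`, with finite `p`-th moment for the nested distance. -/
def MemPpLift (p : ℝ) (dA : A → A → ℝ≥0∞) (dB : B → B → ℝ≥0∞)
    (μ : Measure (A × Measure B)) : Prop :=
  IsProbabilityMeasure μ ∧ (∀ᵐ z ∂μ, MemPp p dB z.2) ∧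
    ∃ z₀ : A × Measure B, MemPp p dB z₀.2 ∧ ∫⁻ z, liftDist p dA dB z₀ z ^ p ∂μ ≠ ∞

/-- Two-time-point causality: given a coupling `π` of measures on products
`A₁ × B₁` and `A₂ × B₂`, the conditional law of `Y₁` given `X = (X₁, X₂)`
coincides with the conditional law of `Y₁` given `X₁`. -/
def Causal2 {A₁ B₁ A₂ B₂ : Type*} [MeasurableSpace A₁] [MeasurableSpace B₁]
    [MeasurableSpace A₂] [MeasurableSpace B₂]
    (π : Measure ((A₁ × B₁) × (A₂ × B₂))) : Prop :=
  ∀ S : Set A₂, MeasurableSet S →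
    (π[fun z => S.indicator (fun _ => (1 : ℝ)) z.2.1 |
        MeasurableSpace.comap Prod.fst inferInstance])
      =ᵐ[π]
    (π[fun z => S.indicator (fun _ => (1 : ℝ)) z.2.1 |
        MeasurableSpace.comap (fun z => z.1.1) inferInstance])

/-- The two-time-point causal Wasserstein "distance" on `𝒫_p(𝒳₁ × 𝒳₂)`. -/
def CW2 (p : ℝ) (dA : A → A → ℝ≥0∞) (dB : B → B → ℝ≥0∞)
    (μ ν : Measure (A × B)) : ℝ≥0∞ :=
  ⨅ π ∈ {π ∈ Cpl μ ν | Causal2 π},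
    (∫⁻ z, (dA z.1.1 z.2.1 ^ p + dB z.1.2 z.2.2 ^ p) ∂π) ^ (1 / p)

end Lifted

/-!
Let `D` be a measurable pseudo-distance, `π n` couplings of `μs n` and `μ`, and `f = D(x₀, X)`,
`g = D(x₀, Y)`, `h = D(X, Y)`. Each of the three functions is at most the sum of the other two, so
by Minkowski, if the `p`-th moment of one of them tends to `0`, then those of the other two have the
same limit. This alone gives the convergence of moments from that of the costs.

Conversely, let `A = {1 ≤ h}`. If `∫ min(1, h)^p → 0`, then `π n A → 0` and `∫_{Aᶜ} h^p → 0`. Since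
the law `μ` of `Y` is fixed, `∫_A g^p → 0`, so `∫_{Aᶜ} g^p`, hence `∫_{Aᶜ} f^p`, tends to the full
limit moment. Convergence of moments then leaves nothing for `∫_A f^p`, and `∫_A h^p → 0` follows.
None of this alters the coupling, so bicausality is carried along untouched.
-/

section Limits

variable {ι : Type*} {l : Filter ι} {a b : ℝ≥0∞} {u v : ι → ℝ≥0∞}

lemma tendsto_rpow_iff {r : ℝ} (hr : 0 < r) :
    Tendsto (fun i => u i ^ r) l (𝓝 (a ^ r)) ↔ Tendsto u l (𝓝 a) :=
  (ENNReal.orderIsoRpow r hr).toHomeomorph.isEmbedding.tendsto_nhds_iff.symm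

lemma tendsto_rpow_zero_iff {r : ℝ} (hr : 0 < r) :
    Tendsto (fun i => u i ^ r) l (𝓝 0) ↔ Tendsto u l (𝓝 0) := by
  simpa only [ENNReal.zero_rpow_of_pos hr] using tendsto_rpow_iff (a := 0) hr

lemma tendsto_sub_of_tendsto_add_left (hb : b ≠ ∞) (hu : Tendsto u l (𝓝 b))
    (huv : Tendsto (fun i => u i + v i) l (𝓝 a)) : Tendsto v l (𝓝 (a - b)) := by
  refine (ENNReal.Tendsto.sub huv hu (Or.inr hb)).congr' ?_
  filter_upwards [hu.eventually_ne hb] with i hi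
  exact ENNReal.add_sub_cancel_left hi

lemma exists_tendsto_zero_of_tendsto_biInf_zero {κ : Type*} {s : ℕ → Set κ} {F : κ → ℝ≥0∞}
    (h : Tendsto (fun n => ⨅ k ∈ s n, F k) atTop (𝓝 0)) :
    ∃ k : ℕ → κ, (∀ᶠ n in atTop, k n ∈ s n) ∧ Tendsto (fun n => F (k n)) atTop (𝓝 0) := by
  have hnear : ∀ᶠ n : ℕ in atTop, ∃ k ∈ s n, F k < (⨅ k ∈ s n, F k) + (n : ℝ≥0∞)⁻¹ := by
    filter_upwards [h.eventually_ne ENNReal.zero_ne_top] with n hn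
    have hlt := ENNReal.lt_add_right hn (ENNReal.inv_ne_zero.2 (ENNReal.natCast_ne_top n))
    simpa only [iInf_lt_iff, exists_prop] using hlt
  obtain ⟨k, hk⟩ := hnear.choice
  have hbound : Tendsto (fun n : ℕ => (⨅ k ∈ s n, F k) + (n : ℝ≥0∞)⁻¹) atTop (𝓝 0) := by
    simpa only [add_zero] using h.add ENNReal.tendsto_inv_nat_nhds_zero
  exact ⟨k, hk.mono fun _ hn => hn.1,
    tendsto_nhds_bot_mono hbound (hk.mono fun _ hn => hn.2.le)⟩

end Limits

section Moments

variable {Ω : Type*} [MeasurableSpace Ω] {p : ℝ} {f g h : Ω → ℝ≥0∞}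

lemma lintegral_rpow_le_add_of_le_add (hp : 1 ≤ p) (hg : Measurable g) (hh : Measurable h)
    (hf : f ≤ g + h) (P : Measure Ω) :
    (∫⁻ z, f z ^ p ∂P) ^ (1 / p) ≤
      (∫⁻ z, g z ^ p ∂P) ^ (1 / p) + (∫⁻ z, h z ^ p ∂P) ^ (1 / p) := by
  have hp0 : 0 ≤ p := zero_le_one.trans hp
  refine le_trans ?_ (ENNReal.lintegral_Lp_add_le hg.aemeasurable hh.aemeasurable hp)
  exact ENNReal.rpow_le_rpow (lintegral_mono fun z => ENNReal.rpow_le_rpow (hf z) hp0)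
    (one_div_nonneg.2 hp0)

variable {ι : Type*} {l : Filter ι} {P : ι → Measure Ω} {M : ℝ≥0∞}

lemma tendsto_lintegral_rpow_of_le_add (hp : 1 ≤ p) (hf : Measurable f) (hg : Measurable g)
    (hh : Measurable h) (hfgh : f ≤ g + h) (hgfh : g ≤ f + h)
    (hh0 : Tendsto (fun i => ∫⁻ z, h z ^ p ∂P i) l (𝓝 0))
    (hgM : Tendsto (fun i => ∫⁻ z, g z ^ p ∂P i) l (𝓝 M)) :
    Tendsto (fun i => ∫⁻ z, f z ^ p ∂P i) l (𝓝 M) := by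
  have hr : 0 < 1 / p := one_div_pos.2 (zero_lt_one.trans_le hp)
  rw [← tendsto_rpow_iff hr] at hgM ⊢
  rw [← tendsto_rpow_zero_iff hr] at hh0
  have hlow := ENNReal.Tendsto.sub hgM hh0 (Or.inr ENNReal.zero_ne_top)
  have hup := hgM.add hh0
  rw [tsub_zero] at hlow
  rw [add_zero] at hup
  exact tendsto_of_tendsto_of_tendsto_of_le_of_le hlow hup
    (fun i => tsub_le_iff_right.2 (lintegral_rpow_le_add_of_le_add hp hf hh hgfh (P i)))
    (fun i => lintegral_rpow_le_add_of_le_add hp hg hh hfgh (P i))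

lemma tendsto_lintegral_rpow_zero_of_triangle (hp : 1 ≤ p) (hf : Measurable f)
    (hg : Measurable g) (hh : Measurable h) (hfgh : f ≤ g + h) (hgfh : g ≤ f + h)
    (hhgf : h ≤ g + f) {A : Set Ω} (hA : MeasurableSet A) (hM : M ≠ ∞)
    (hfM : Tendsto (fun i => ∫⁻ z, f z ^ p ∂P i) l (𝓝 M))
    (hgM : Tendsto (fun i => ∫⁻ z, g z ^ p ∂P i) l (𝓝 M))
    (hgA : Tendsto (fun i => ∫⁻ z in A, g z ^ p ∂P i) l (𝓝 0))
    (hhAc : Tendsto (fun i => ∫⁻ z in Aᶜ, h z ^ p ∂P i) l (𝓝 0)) :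
    Tendsto (fun i => ∫⁻ z, h z ^ p ∂P i) l (𝓝 0) := by
  have hgAc : Tendsto (fun i => ∫⁻ z in Aᶜ, g z ^ p ∂P i) l (𝓝 M) := by
    have hsplit := hgM.congr fun i => (lintegral_add_compl (fun z => g z ^ p) hA).symm
    simpa only [tsub_zero] using tendsto_sub_of_tendsto_add_left ENNReal.zero_ne_top hgA hsplit
  have hfAc : Tendsto (fun i => ∫⁻ z in Aᶜ, f z ^ p ∂P i) l (𝓝 M) :=
    tendsto_lintegral_rpow_of_le_add hp hf hg hh hfgh hgfh hhAc hgAc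
  have hfA : Tendsto (fun i => ∫⁻ z in A, f z ^ p ∂P i) l (𝓝 0) := by
    have hsplit := hfM.congr fun i =>
      ((add_comm _ _).trans (lintegral_add_compl (fun z => f z ^ p) hA)).symm
    simpa only [tsub_self] using tendsto_sub_of_tendsto_add_left hM hfAc hsplit
  have hhA : Tendsto (fun i => ∫⁻ z in A, h z ^ p ∂P i) l (𝓝 0) :=
    tendsto_lintegral_rpow_of_le_add hp hh hg hf hhgf (add_comm f h ▸ hgfh) hfA hgA
  simpa only [lintegral_add_compl _ hA, add_zero] using hhA.add hhAc

lemma measure_one_le_le_lintegral_min_one_rpow (hp : 0 < p) (hh : Measurable h) (Q : Measure Ω) :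
    Q {z | 1 ≤ h z} ≤ ∫⁻ z, min 1 (h z) ^ p ∂Q := by
  have hsub : {z | 1 ≤ h z} ⊆ {z | 1 ≤ min 1 (h z) ^ p} := fun z hz =>
    ENNReal.one_le_rpow (le_min le_rfl hz) hp
  have hmeas : Measurable fun z => min 1 (h z) ^ p := (measurable_const.min hh).pow_const p
  have markov := mul_meas_ge_le_lintegral (μ := Q) hmeas 1
  rw [one_mul] at markov
  exact (measure_mono hsub).trans markov

lemma setLIntegral_rpow_le_lintegral_min_one_rpow (hh : Measurable h) (Q : Measure Ω) :
    ∫⁻ z in {z | 1 ≤ h z}ᶜ, h z ^ p ∂Q ≤ ∫⁻ z, min 1 (h z) ^ p ∂Q := by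
  have hmeas : MeasurableSet {z | 1 ≤ h z} := measurableSet_le measurable_const hh
  refine (setLIntegral_mono' hmeas.compl fun z hz => ?_).trans (setLIntegral_le_lintegral _ _)
  have hz1 : h z < 1 := not_le.1 hz
  rw [min_eq_right hz1.le]

end Moments

section FixedLaw

variable {E : Type*} [MeasurableSpace E] {ν : Measure E} {g : E → ℝ≥0∞}

lemma tendsto_lintegral_sub_natCast (hg : Measurable g) (hfin : ∫⁻ x, g x ∂ν ≠ ∞) :
    Tendsto (fun k : ℕ => ∫⁻ x, (g x - k) ∂ν) atTop (𝓝 0) := by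
  have hpointwise : ∀ᵐ x ∂ν, Tendsto (fun k : ℕ => g x - k) atTop (𝓝 0) := by
    filter_upwards [ae_lt_top hg hfin] with x hx
    simpa only [ENNReal.sub_top] using
      ENNReal.Tendsto.sub tendsto_const_nhds ENNReal.tendsto_nat_nhds_top (Or.inl hx.ne)
  simpa only [lintegral_zero] using tendsto_lintegral_of_dominated_convergence
    (F := fun (k : ℕ) x => g x - k) g (fun k => hg.sub measurable_const)
    (fun k => .of_forall fun x => tsub_le_self) hfin hpointwise

variable {Ω ι : Type*} [MeasurableSpace Ω] {Y : Ω → E}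

lemma setLIntegral_comp_le_of_map_eq {P : Measure Ω} (hg : Measurable g) (hY : Measurable Y)
    (hP : P.map Y = ν) (B : Set Ω) (c : ℝ≥0∞) :
    ∫⁻ z in B, g (Y z) ∂P ≤ ∫⁻ x, (g x - c) ∂ν + c * P B := by
  calc ∫⁻ z in B, g (Y z) ∂P
      ≤ ∫⁻ z in B, (g (Y z) - c + c) ∂P := lintegral_mono fun z => le_tsub_add
    _ = ∫⁻ z in B, (g (Y z) - c) ∂P + c * P B := by
        rw [lintegral_add_right _ measurable_const, setLIntegral_const]
    _ ≤ ∫⁻ z, (g (Y z) - c) ∂P + c * P B := by gcongr; exact Measure.restrict_le_self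
    _ = ∫⁻ x, (g x - c) ∂ν + c * P B := by
        rw [← hP, lintegral_map (f := fun x => g x - c) (hg.sub measurable_const) hY]

lemma tendsto_setLIntegral_comp_of_map_eq {l : Filter ι} {P : ι → Measure Ω} (hg : Measurable g)
    (hfin : ∫⁻ x, g x ∂ν ≠ ∞) (hY : Measurable Y) (hP : ∀ᶠ i in l, (P i).map Y = ν)
    {B : ι → Set Ω} (hB : Tendsto (fun i => P i (B i)) l (𝓝 0)) :
    Tendsto (fun i => ∫⁻ z in B i, g (Y z) ∂P i) l (𝓝 0) := by
  refine ENNReal.tendsto_nhds_zero.2 fun ε hε => ?_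
  have hε2 : 0 < ε / 2 := ENNReal.half_pos hε.ne'
  obtain ⟨k, hk⟩ :=
    (ENNReal.tendsto_nhds_zero.1 (tendsto_lintegral_sub_natCast hg hfin) _ hε2).exists
  have hkB : Tendsto (fun i => (k : ℝ≥0∞) * P i (B i)) l (𝓝 0) := by
    simpa only [mul_zero] using ENNReal.Tendsto.const_mul hB (Or.inr (ENNReal.natCast_ne_top k))
  filter_upwards [hP, ENNReal.tendsto_nhds_zero.1 hkB _ hε2] with i hPi hi
  calc ∫⁻ z in B i, g (Y z) ∂P i
      ≤ ∫⁻ x, (g x - k) ∂ν + k * P i (B i) := setLIntegral_comp_le_of_map_eq hg hY hPi (B i) k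
    _ ≤ ε / 2 + ε / 2 := add_le_add hk hi
    _ = ε := ENNReal.add_halves ε

end FixedLaw

section Couplings

variable {E ι : Type*} [MeasurableSpace E] {l : Filter ι} {p : ℝ} {D : E → E → ℝ≥0∞}
  {ν : Measure E} {νs : ι → Measure E} {π : ι → Measure (E × E)}

lemma lintegral_fst_of_mem_Cpl {α β : Type*} [MeasurableSpace α] [MeasurableSpace β]
    {μ₁ : Measure α} {μ₂ : Measure β} {γ : Measure (α × β)} (hγ : γ ∈ Cpl μ₁ μ₂)
    {g : α → ℝ≥0∞} (hg : Measurable g) : ∫⁻ z, g z.1 ∂γ = ∫⁻ x, g x ∂μ₁ := by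
  rw [← hγ.1, lintegral_map hg measurable_fst]

lemma lintegral_snd_of_mem_Cpl {α β : Type*} [MeasurableSpace α] [MeasurableSpace β]
    {μ₁ : Measure α} {μ₂ : Measure β} {γ : Measure (α × β)} (hγ : γ ∈ Cpl μ₁ μ₂)
    {g : β → ℝ≥0∞} (hg : Measurable g) : ∫⁻ z, g z.2 ∂γ = ∫⁻ y, g y ∂μ₂ := by
  rw [← hγ.2, lintegral_map hg measurable_snd]

lemma tendsto_moment_of_tendsto_cost (hp : 1 ≤ p) (hD : Measurable (Function.uncurry D))
    (hsymm : ∀ x y, D x y = D y x) (htri : ∀ x y z, D x z ≤ D x y + D y z)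
    (hπ : ∀ᶠ i in l, π i ∈ Cpl (νs i) ν)
    (hcost : Tendsto (fun i => ∫⁻ z, D z.1 z.2 ^ p ∂π i) l (𝓝 0)) (x₀ : E) :
    Tendsto (fun i => ∫⁻ x, D x₀ x ^ p ∂νs i) l (𝓝 (∫⁻ x, D x₀ x ^ p ∂ν)) := by
  have hx₀ : Measurable (D x₀) := hD.of_uncurry_left
  have hback (z : E × E) : D x₀ z.1 ≤ D x₀ z.2 + D z.1 z.2 :=
    (htri x₀ z.2 z.1).trans_eq (by rw [hsymm z.2 z.1])
  have hsnd : Tendsto (fun i => ∫⁻ z, D x₀ z.2 ^ p ∂π i) l (𝓝 (∫⁻ x, D x₀ x ^ p ∂ν)) :=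
    tendsto_const_nhds.congr' <| hπ.mono fun i hi =>
      (lintegral_snd_of_mem_Cpl hi (hx₀.pow_const p)).symm
  have hfst := tendsto_lintegral_rpow_of_le_add hp (hx₀.comp measurable_fst)
    (hx₀.comp measurable_snd) hD hback (fun z => htri x₀ z.1 z.2) hcost hsnd
  exact hfst.congr' <| hπ.mono fun i hi => lintegral_fst_of_mem_Cpl hi (hx₀.pow_const p)

lemma tendsto_cost_of_tendsto_min_one_cost (hp : 1 ≤ p) (hD : Measurable (Function.uncurry D))
    (hsymm : ∀ x y, D x y = D y x) (htri : ∀ x y z, D x z ≤ D x y + D y z)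
    (hπ : ∀ᶠ i in l, π i ∈ Cpl (νs i) ν) {x₀ : E} (hfin : ∫⁻ x, D x₀ x ^ p ∂ν ≠ ∞)
    (hmoment : Tendsto (fun i => ∫⁻ x, D x₀ x ^ p ∂νs i) l (𝓝 (∫⁻ x, D x₀ x ^ p ∂ν)))
    (hcost : Tendsto (fun i => ∫⁻ z, min 1 (D z.1 z.2) ^ p ∂π i) l (𝓝 0)) :
    Tendsto (fun i => ∫⁻ z, D z.1 z.2 ^ p ∂π i) l (𝓝 0) := by
  have hx₀ : Measurable (D x₀) := hD.of_uncurry_left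
  have hback (z : E × E) : D x₀ z.1 ≤ D x₀ z.2 + D z.1 z.2 :=
    (htri x₀ z.2 z.1).trans_eq (by rw [hsymm z.2 z.1])
  have hcross (z : E × E) : D z.1 z.2 ≤ D x₀ z.2 + D x₀ z.1 :=
    (htri z.1 x₀ z.2).trans_eq (by rw [hsymm z.1 x₀, add_comm])
  have hfst : Tendsto (fun i => ∫⁻ z, D x₀ z.1 ^ p ∂π i) l (𝓝 (∫⁻ x, D x₀ x ^ p ∂ν)) :=
    hmoment.congr' <| hπ.mono fun i hi => (lintegral_fst_of_mem_Cpl hi (hx₀.pow_const p)).symm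
  have hsnd : Tendsto (fun i => ∫⁻ z, D x₀ z.2 ^ p ∂π i) l (𝓝 (∫⁻ x, D x₀ x ^ p ∂ν)) :=
    tendsto_const_nhds.congr' <| hπ.mono fun i hi =>
      (lintegral_snd_of_mem_Cpl hi (hx₀.pow_const p)).symm
  have hfar : Tendsto (fun i => π i {z | 1 ≤ D z.1 z.2}) l (𝓝 0) :=
    tendsto_nhds_bot_mono' hcost fun i =>
      measure_one_le_le_lintegral_min_one_rpow (zero_lt_one.trans_le hp) hD (π i)
  have hsnd_far : Tendsto (fun i => ∫⁻ z in {z | 1 ≤ D z.1 z.2}, D x₀ z.2 ^ p ∂π i) l (𝓝 0) :=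
    tendsto_setLIntegral_comp_of_map_eq (hx₀.pow_const p) hfin measurable_snd
      (hπ.mono fun i hi => hi.2) hfar
  have hcost_near : Tendsto (fun i => ∫⁻ z in {z | 1 ≤ D z.1 z.2}ᶜ, D z.1 z.2 ^ p ∂π i) l (𝓝 0) :=
    tendsto_nhds_bot_mono' hcost fun i => setLIntegral_rpow_le_lintegral_min_one_rpow hD (π i)
  exact tendsto_lintegral_rpow_zero_of_triangle hp (hx₀.comp measurable_fst)
    (hx₀.comp measurable_snd) hD hback (fun z => htri x₀ z.1 z.2) hcross
    (measurableSet_le measurable_const hD) hfin hfst hsnd hsnd_far hcost_near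

end Couplings

section PathDist

variable {S : Type*} {p : ℝ} {N : ℕ} {d d' : S → S → ℝ≥0∞}

lemma pathDist_comm (hsymm : ∀ x y, d x y = d y x) (x y : Fin N → S) :
    pathDist p d x y = pathDist p d y x := by
  simp only [pathDist, hsymm (x _)]

lemma pathDist_triangle (hp : 1 ≤ p) (htri : ∀ x y z, d x z ≤ d x y + d y z)
    (x y z : Fin N → S) : pathDist p d x z ≤ pathDist p d x y + pathDist p d y z := by
  have hp0 : 0 ≤ p := zero_le_one.trans hp
  refine le_trans ?_ (ENNReal.Lp_add_le Finset.univ (fun t => d (x t) (y t))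
    (fun t => d (y t) (z t)) hp)
  exact ENNReal.rpow_le_rpow
    (Finset.sum_le_sum fun t _ => ENNReal.rpow_le_rpow (htri _ _ _) hp0) (one_div_nonneg.2 hp0)

lemma pathDist_mono (hp : 0 ≤ p) (hle : ∀ x y, d x y ≤ d' x y) (x y : Fin N → S) :
    pathDist p d x y ≤ pathDist p d' x y := by
  unfold pathDist
  gcongr
  exact hle _ _

lemma min_one_pathDist_le (hp : 0 < p) (x y : Fin N → S) :
    min 1 (pathDist p d x y) ≤ pathDist p (fun a b => min 1 (d a b)) x y := by
  by_cases hclose : ∀ t, d (x t) (y t) ≤ 1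
  · refine (min_le_right _ _).trans_eq ?_
    simp only [pathDist, min_eq_right (hclose _)]
  · obtain ⟨t, ht⟩ := not_forall.1 hclose
    refine (min_le_left _ _).trans (ENNReal.one_le_rpow ?_ (one_div_pos.2 hp))
    calc (1 : ℝ≥0∞) = min 1 (d (x t) (y t)) ^ p := by
          rw [min_eq_left (not_le.1 ht).le, ENNReal.one_rpow]
      _ ≤ ∑ s, min 1 (d (x s) (y s)) ^ p :=
          Finset.single_le_sum (f := fun s => min 1 (d (x s) (y s)) ^ p)
            (fun _ _ => zero_le) (Finset.mem_univ t)

lemma measurable_pathDist [MeasurableSpace S] (hd : Measurable (Function.uncurry d)) :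
    Measurable (Function.uncurry (pathDist p d (N := N))) := by
  refine Measurable.pow_const (Finset.measurable_sum _ fun t _ => Measurable.pow_const ?_ p) _
  have hfst : Measurable fun z : (Fin N → S) × (Fin N → S) => z.1 t :=
    (measurable_pi_apply t).comp measurable_fst
  have hsnd : Measurable fun z : (Fin N → S) × (Fin N → S) => z.2 t :=
    (measurable_pi_apply t).comp measurable_snd
  exact hd.comp (hfst.prodMk hsnd)

end PathDist

section AdaptedWasserstein

variable {S : Type*} [MeasurableSpace S] {p : ℝ} {N : ℕ} {d d' : S → S → ℝ≥0∞}
  {μ : Measure (Fin N → S)} {μs : ℕ → Measure (Fin N → S)}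

lemma AW_mono (hp : 0 ≤ p) (hle : ∀ x y, d x y ≤ d' x y) (μ ν : Measure (Fin N → S)) :
    AW p d μ ν ≤ AW p d' μ ν := by
  refine iInf₂_mono fun π _ => ?_
  gcongr
  exact pathDist_mono hp hle _ _

lemma tendsto_AW_zero_iff (hp : 0 < p) :
    Tendsto (fun n => AW p d (μs n) μ) atTop (𝓝 0) ↔
      ∃ π : ℕ → Measure ((Fin N → S) × (Fin N → S)),
        (∀ᶠ n in atTop, π n ∈ Cpl (μs n) μ ∧ Bicausal (π n)) ∧
          Tendsto (fun n => ∫⁻ z, pathDist p d z.1 z.2 ^ p ∂π n) atTop (𝓝 0) := by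
  constructor
  · intro h
    obtain ⟨π, hπ, hcost⟩ := exists_tendsto_zero_of_tendsto_biInf_zero h
    exact ⟨π, hπ, (tendsto_rpow_zero_iff (one_div_pos.2 hp)).1 hcost⟩
  · rintro ⟨π, hπ, hcost⟩
    refine tendsto_nhds_bot_mono ((tendsto_rpow_zero_iff (one_div_pos.2 hp)).2 hcost) ?_
    filter_upwards [hπ] with n hn
    exact iInf₂_le (π n) hn

lemma tendsto_moment_of_tendsto_AW (hp : 1 ≤ p) (hd : Measurable (Function.uncurry d))
    (hsymm : ∀ x y, d x y = d y x) (htri : ∀ x y z, d x z ≤ d x y + d y z)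
    (h : Tendsto (fun n => AW p d (μs n) μ) atTop (𝓝 0)) (x₀ : Fin N → S) :
    Tendsto (fun n => ∫⁻ x, pathDist p d x₀ x ^ p ∂μs n) atTop
      (𝓝 (∫⁻ x, pathDist p d x₀ x ^ p ∂μ)) := by
  obtain ⟨π, hπ, hcost⟩ := (tendsto_AW_zero_iff (zero_lt_one.trans_le hp)).1 h
  exact tendsto_moment_of_tendsto_cost hp (measurable_pathDist hd) (pathDist_comm hsymm)
    (pathDist_triangle hp htri) (hπ.mono fun n hn => hn.1) hcost x₀

lemma tendsto_AW_of_tendsto_AW_min_one (hp : 1 ≤ p) (hd : Measurable (Function.uncurry d))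
    (hsymm : ∀ x y, d x y = d y x) (htri : ∀ x y z, d x z ≤ d x y + d y z)
    (h : Tendsto (fun n => AW p (fun x y => min 1 (d x y)) (μs n) μ) atTop (𝓝 0))
    {x₀ : Fin N → S} (hfin : ∫⁻ x, pathDist p d x₀ x ^ p ∂μ ≠ ∞)
    (hmoment : Tendsto (fun n => ∫⁻ x, pathDist p d x₀ x ^ p ∂μs n) atTop
      (𝓝 (∫⁻ x, pathDist p d x₀ x ^ p ∂μ))) :
    Tendsto (fun n => AW p d (μs n) μ) atTop (𝓝 0) := by
  have hp0 : 0 < p := zero_lt_one.trans_le hp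
  obtain ⟨π, hπ, hcost⟩ := (tendsto_AW_zero_iff hp0).1 h
  have hcost_min : Tendsto (fun n => ∫⁻ z, min 1 (pathDist p d z.1 z.2) ^ p ∂π n) atTop (𝓝 0) :=
    tendsto_nhds_bot_mono' hcost fun n => lintegral_mono fun z =>
      ENNReal.rpow_le_rpow (min_one_pathDist_le hp0 z.1 z.2) hp0.le
  exact (tendsto_AW_zero_iff hp0).2 ⟨π, hπ, tendsto_cost_of_tendsto_min_one_cost hp
    (measurable_pathDist hd) (pathDist_comm hsymm) (pathDist_triangle hp htri)
    (hπ.mono fun n hn => hn.1) hfin hmoment hcost_min⟩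

theorem AW_convergence_iff_bounded_and_moments_general (hp : 1 ≤ p)
    (hd : Measurable (Function.uncurry d)) (hsymm : ∀ x y, d x y = d y x)
    (htri : ∀ x y z, d x z ≤ d x y + d y z) (hμ : MemPp p (pathDist p d) μ) :
    List.TFAE [
      Tendsto (fun n => AW p d (μs n) μ) atTop (𝓝 0),
      Tendsto (fun n => AW p (fun x y => min 1 (d x y)) (μs n) μ) atTop (𝓝 0) ∧
        ∀ x₀ : Fin N → S, Tendsto (fun n => ∫⁻ x, pathDist p d x₀ x ^ p ∂μs n) atTop
          (𝓝 (∫⁻ x, pathDist p d x₀ x ^ p ∂μ)),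
      Tendsto (fun n => AW p (fun x y => min 1 (d x y)) (μs n) μ) atTop (𝓝 0) ∧
        ∃ x₀ : Fin N → S, ∫⁻ x, pathDist p d x₀ x ^ p ∂μ ≠ ∞ ∧
          Tendsto (fun n => ∫⁻ x, pathDist p d x₀ x ^ p ∂μs n) atTop
            (𝓝 (∫⁻ x, pathDist p d x₀ x ^ p ∂μ))] := by
  tfae_have 1 → 2 := fun h =>
    ⟨tendsto_nhds_bot_mono' h fun n =>
        AW_mono (zero_le_one.trans hp) (fun _ _ => min_le_right _ _) (μs n) μ,
      tendsto_moment_of_tendsto_AW hp hd hsymm htri h⟩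
  tfae_have 2 → 3 := fun ⟨h, hmoment⟩ =>
    let ⟨x₀, hx₀⟩ := hμ.2
    ⟨h, x₀, hx₀, hmoment x₀⟩
  tfae_have 3 → 1 := fun ⟨h, _, hx₀, hmoment⟩ =>
    tendsto_AW_of_tendsto_AW_min_one hp hd hsymm htri h hx₀ hmoment
  tfae_finish

end AdaptedWasserstein

/-- **Lemma 1.3.**  `μ_n → μ` in `𝒜𝒲_p` (built from `ρ`) iff `μ_n → μ` in the
adapted distance built from the bounded metric `min(1, ρ)` and the `p`-th
moments converge. -/
theorem AW_convergence_iff_bounded_and_moments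
    {X : Type} [MetricSpace X] [CompleteSpace X] [SecondCountableTopology X]
    [MeasurableSpace X] [BorelSpace X] [Nonempty X]
    (p : ℝ) (hp : 1 ≤ p) (N : ℕ) (hN : 0 < N)
    (μ : Measure (Fin N → X)) (μs : ℕ → Measure (Fin N → X))
    (hμ : MemPp p (pathDist p (edist : X → X → ℝ≥0∞)) μ)
    (hμs : ∀ n, MemPp p (pathDist p (edist : X → X → ℝ≥0∞)) (μs n)) :
    let d : X → X → ℝ≥0∞ := edist
    let dB : X → X → ℝ≥0∞ := fun x y => min 1 (edist x y)
    (Tendsto (fun n => AW p d (μs n) μ) atTop (𝓝 0) ↔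
      (Tendsto (fun n => AW p dB (μs n) μ) atTop (𝓝 0) ∧
        ∀ x₀ : Fin N → X,
          Tendsto (fun n => ∫⁻ x, pathDist p d x₀ x ^ p ∂(μs n)) atTop
            (𝓝 (∫⁻ x, pathDist p d x₀ x ^ p ∂μ)))) := by
  exact (AW_convergence_iff_bounded_and_moments_general hp measurable_edist edist_comm
    edist_triangle hμ).out 0 1

end AWPaper
end
end

section
/- Assume ρ is bounded. A subset A ⊆ 𝒫(X̄) is relatively compact with respect to the usual weak topology if and only if its image 𝒩[A] ⊆ 𝒫(𝒳_1) under the nested-distribution map 𝒩 is relatively compact with respect to the nested Wasserstein metric W_{D_1,p}. -/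
open MeasureTheory ProbabilityTheory ENNReal Filter Topology

noncomputable section

namespace AWPaper

/-! ### Generic constructions -/

variable {α β : Type*}

/-! ### Path spaces -/

variable {X : Type*} [MeasurableSpace X]

/-!
As `ρ` is bounded, each Wasserstein distance in the recursion metrizes weak convergence, so the
nested space can be replaced by the Polish space `Y₁` given by `Y_N = X`, `Y_t = X × 𝒫(Y_{t+1})`.
It sits in the nested space as an isolated isometric copy, which carries every nested distribution,
so relative compactness of `𝒩[A]` can be tested in `𝒫(Y₁)`.

Averaging out the inner laws is a Markov kernel from `Y₁` to `X̄`; its action on laws is a left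
inverse of `𝒩`. It is Feller, so relatively compact sets of nested distributions come from
relatively compact sets of path laws. Conversely, by Markov's inequality, a set of random measures
is tight as soon as their intensities are; by induction the kernel reflects tightness, and
Prokhorov's theorem gives the other implication.
-/

/-! ### Spaces of probability measures -/

section ProbabilityMeasure

variable {Y : Type*} [TopologicalSpace Y] [MeasurableSpace Y]

lemma isInducing_integral_boundedContinuousFunction [OpensMeasurableSpace Y] :
    IsInducing fun (μ : ProbabilityMeasure Y) (f : BoundedContinuousFunction Y ℝ) =>
      ∫ y, f y ∂(μ : Measure Y) := by
  refine isInducing_iff_nhds.2 fun μ => le_antisymm (map_le_iff_le_comap.1 ?_) ?_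
  · exact tendsto_pi_nhds.2 fun f =>
      (ProbabilityMeasure.continuous_integral_boundedContinuousFunction f).tendsto μ
  · exact ProbabilityMeasure.tendsto_iff_forall_integral_tendsto.2 <|
      tendsto_pi_nhds.1 tendsto_comap

lemma probabilityMeasure_topology_eq_generateFrom [OpensMeasurableSpace Y] :
    (inferInstance : TopologicalSpace (ProbabilityMeasure Y)) =
      TopologicalSpace.generateFrom (⋃ f : BoundedContinuousFunction Y ℝ,
        {s | ∃ U : Set ℝ, IsOpen U ∧ (fun μ : ProbabilityMeasure Y =>
          ∫ y, f y ∂(μ : Measure Y)) ⁻¹' U = s}) := by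
  refine isInducing_integral_boundedContinuousFunction.eq_induced.trans ?_
  refine Eq.trans ?_ (generateFrom_iUnion_isOpen fun f : BoundedContinuousFunction Y ℝ =>
    TopologicalSpace.induced (fun μ : ProbabilityMeasure Y => ∫ y, f y ∂(μ : Measure Y))
      inferInstance).symm
  simp only [Pi.topologicalSpace, induced_iInf, induced_compose, Function.comp_def]

lemma isInducing_probabilityMeasure_map {H : Type*} [TopologicalSpace H]
    [TopologicalSpace.PseudoMetrizableSpace H] [TopologicalSpace.SeparableSpace H]
    [BorelSpace Y] [MeasurableSpace H] [BorelSpace H] {f : Y → H} (hf : IsInducing f) :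
    IsInducing fun μ : ProbabilityMeasure Y => μ.map hf.continuous.measurable.aemeasurable := by
  have hfm := hf.continuous.measurable
  set F := fun μ : ProbabilityMeasure Y => μ.map hfm.aemeasurable
  refine isInducing_iff_nhds.2 fun μ => le_antisymm
    ((ProbabilityMeasure.continuous_map hf.continuous).tendsto μ).le_comap ?_
  change Tendsto id (comap F (𝓝 (F μ))) (𝓝 μ)
  refine tendsto_of_forall_isOpen_le_liminf' fun G hG => ?_
  obtain ⟨G', hG', rfl⟩ := hf.isOpen_iff.1 hG
  have hF : Tendsto F (comap F (𝓝 (F μ))) (𝓝 (F μ)) := tendsto_comap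
  simpa [F, Measure.map_apply hfm hG'.measurableSet] using
    ProbabilityMeasure.le_liminf_measure_open_of_tendsto hF hG'

lemma measurable_probabilityMeasure_integral [OpensMeasurableSpace Y]
    (f : BoundedContinuousFunction Y ℝ) :
    Measurable fun μ : ProbabilityMeasure Y => ∫ y, f y ∂(μ : Measure Y) :=
  (f.continuous.stronglyMeasurable.integral_kernel
    (κ := ⟨((↑) : ProbabilityMeasure Y → Measure Y), measurable_subtype_coe⟩)).measurable

variable [TopologicalSpace.MetrizableSpace Y] [SecondCountableTopology Y] [BorelSpace Y]

open scoped unitInterval in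
instance : SecondCountableTopology (ProbabilityMeasure Y) := by
  let := TopologicalSpace.metrizableSpaceMetric Y
  let := TopologicalSpace.metrizableSpaceMetric (ProbabilityMeasure (ℕ → I))
  obtain ⟨F, hF⟩ := Metric.PiNatEmbed.exists_embedding_to_hilbert_cube (X := Y)
  exact (isInducing_probabilityMeasure_map hF.isInducing).secondCountableTopology

instance : BorelSpace (ProbabilityMeasure Y) := by
  refine ⟨le_antisymm (Measurable.comap_le ?_) ?_⟩
  · let : MeasurableSpace (ProbabilityMeasure Y) := borel _
    have : BorelSpace (ProbabilityMeasure Y) := ⟨rfl⟩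
    refine Measurable.measure_of_isPiSystem_of_isProbabilityMeasure
      (μ := ((↑) : ProbabilityMeasure Y → Measure Y))
      BorelSpace.measurable_eq isPiSystem_isOpen fun G hG => ?_
    refine (lowerSemicontinuous_iff_le_liminf.2 fun μ => ?_).measurable
    exact ProbabilityMeasure.le_liminf_measure_open_of_tendsto tendsto_id hG
  · rw [borel_eq_generateFrom_of_subbasis probabilityMeasure_topology_eq_generateFrom]
    refine MeasurableSpace.generateFrom_le fun s hs => ?_
    obtain ⟨f, U, hU, rfl⟩ := Set.mem_iUnion.1 hs
    exact hU.measurableSet.preimage (measurable_probabilityMeasure_integral f)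

instance [CompactSpace Y] : PolishSpace (ProbabilityMeasure Y) := by
  let := TopologicalSpace.metrizableSpaceMetric (ProbabilityMeasure Y)
  infer_instance

end ProbabilityMeasure

section StandardBorel

variable {Y Z : Type*} [MeasurableSpace Y] [MeasurableSpace Z]

lemma range_measure_map {f : Y → Z} (hf : MeasurableEmbedding f) :
    Set.range (Measure.map f) = {m : Measure Z | m (Set.range f)ᶜ = 0} := by
  refine Set.Subset.antisymm ?_ fun m hm => ⟨m.comap f, ?_⟩
  · rintro _ ⟨μ, rfl⟩
    simp [hf.map_apply]
  · exact (hf.map_comap m).trans (Measure.restrict_eq_self_of_ae_mem (mem_ae_iff.2 hm))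

lemma measurable_measure_comap {f : Y → Z} (hf : MeasurableEmbedding f) :
    Measurable (Measure.comap f) := by
  refine Measure.measurable_of_measurable_coe _ fun s hs => ?_
  simp_rw [hf.comap_apply]
  exact Measure.measurable_coe (hf.measurableSet_image' hs)

lemma measurableEmbedding_measure_map {f : Y → Z} (hf : MeasurableEmbedding f) :
    MeasurableEmbedding (Measure.map f) := by
  refine .of_measurable_inverse (g := Measure.comap f) (Measure.measurable_map f hf.measurable) ?_
    (measurable_measure_comap hf) hf.comap_map
  rw [range_measure_map hf]
  exact Measure.measurable_coe hf.measurableSet_range.compl (measurableSet_singleton 0)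

lemma measurableEmbedding_probabilityMeasure_coe :
    MeasurableEmbedding ((↑) : ProbabilityMeasure Y → Measure Y) :=
  .subtype_coe ProbabilityMeasure.measurableSet_isProbabilityMeasure

lemma range_probabilityMeasure_coe_map {f : Y → Z} (hf : MeasurableEmbedding f) :
    Set.range (fun μ : ProbabilityMeasure Y => (μ : Measure Y).map f) =
      {m | IsProbabilityMeasure m ∧ m (Set.range f)ᶜ = 0} := by
  ext m
  constructor
  · rintro ⟨μ, rfl⟩
    exact ⟨Measure.isProbabilityMeasure_map hf.measurable.aemeasurable,
      (range_measure_map hf).le ⟨_, rfl⟩⟩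
  · rintro ⟨hm, hm0⟩
    obtain ⟨μ, rfl⟩ := (range_measure_map hf).ge hm0
    exact ⟨⟨μ, Measure.isProbabilityMeasure_of_map f⟩, rfl⟩

lemma measurableEmbedding_of_comp {W : Type*} [MeasurableSpace W] {f : Y → Z} {g : Z → W}
    (hg : MeasurableEmbedding g) (hgf : MeasurableEmbedding (g ∘ f)) : MeasurableEmbedding f := by
  refine ⟨hgf.injective.of_comp, hg.measurable_comp_iff.1 hgf.measurable, fun s hs => ?_⟩
  rw [← hg.measurableSet_image, ← Set.image_comp]
  exact hgf.measurableSet_image.2 hs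

lemma measurableEmbedding_probabilityMeasure_map {f : Y → Z} (hf : MeasurableEmbedding f) :
    MeasurableEmbedding fun μ : ProbabilityMeasure Y => μ.map hf.measurable.aemeasurable :=
  measurableEmbedding_of_comp measurableEmbedding_probabilityMeasure_coe <|
    (measurableEmbedding_measure_map hf).comp measurableEmbedding_probabilityMeasure_coe

lemma standardBorelSpace_of_measurableEmbedding [StandardBorelSpace Z] {f : Y → Z}
    (hf : MeasurableEmbedding f) : StandardBorelSpace Y := by
  have : StandardBorelSpace (Set.range f) := hf.measurableSet_range.standardBorel
  let := upgradeStandardBorel (Set.range f)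
  let e := hf.equivRange
  let : TopologicalSpace Y := .induced e inferInstance
  have he : IsClosedEmbedding e :=
    ⟨⟨⟨rfl⟩, e.injective⟩, by rw [e.surjective.range_eq]; exact isClosed_univ⟩
  exact ⟨_, e.measurableEmbedding.borelSpace he.isInducing, he.polishSpace⟩

instance [StandardBorelSpace Y] : StandardBorelSpace (ProbabilityMeasure Y) :=
  standardBorelSpace_of_measurableEmbedding <|
    measurableEmbedding_probabilityMeasure_map (measurableEmbedding_sigmoid_comp_embeddingReal Y)

end StandardBorel

/-! ### The Wasserstein functional -/

section Wasserstein

variable {Y : Type*} [MeasurableSpace Y] {p : ℝ} {d : Y → Y → ℝ≥0∞} {C r : ℝ≥0∞} {μ ν ξ : Measure Y}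
  {π : Measure (Y × Y)}

lemma Wp_le_of_mem_cpl (hπ : π ∈ Cpl μ ν) :
    Wp p d μ ν ≤ (∫⁻ z, d z.1 z.2 ^ p ∂π) ^ (1 / p) :=
  iInf₂_le π hπ

lemma measure_univ_of_mem_cpl (hπ : π ∈ Cpl μ ν) : π Set.univ = μ Set.univ := by
  rw [← hπ.1, Measure.map_apply measurable_fst .univ, Set.preimage_univ]

lemma isProbabilityMeasure_of_mem_cpl [IsProbabilityMeasure μ] (hπ : π ∈ Cpl μ ν) :
    IsProbabilityMeasure π :=
  ⟨(measure_univ_of_mem_cpl hπ).trans measure_univ⟩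

lemma map_diag_mem_cpl (μ : Measure Y) : μ.map (fun x => (x, x)) ∈ Cpl μ μ := by
  have hdiag : Measurable fun x : Y => (x, x) := by fun_prop
  exact ⟨(Measure.map_map measurable_fst hdiag).trans Measure.map_id,
    (Measure.map_map measurable_snd hdiag).trans Measure.map_id⟩

lemma map_swap_mem_cpl (hπ : π ∈ Cpl μ ν) : π.map Prod.swap ∈ Cpl ν μ :=
  ⟨(Measure.map_map measurable_fst measurable_swap).trans hπ.2,
    (Measure.map_map measurable_snd measurable_swap).trans hπ.1⟩

lemma add_mem_cpl {π' : Measure (Y × Y)} {μ' ν' : Measure Y} (hπ : π ∈ Cpl μ ν)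
    (hπ' : π' ∈ Cpl μ' ν') : π + π' ∈ Cpl (μ + μ') (ν + ν') :=
  ⟨by rw [Measure.map_add _ _ measurable_fst, hπ.1, hπ'.1],
    by rw [Measure.map_add _ _ measurable_snd, hπ.2, hπ'.2]⟩

lemma sum_mem_cpl {ι : Type*} {π : ι → Measure (Y × Y)} {μ ν : ι → Measure Y}
    (hπ : ∀ i, π i ∈ Cpl (μ i) (ν i)) : Measure.sum π ∈ Cpl (Measure.sum μ) (Measure.sum ν) := by
  constructor
  · rw [Measure.map_sum measurable_fst.aemeasurable, funext fun i => (hπ i).1]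
  · rw [Measure.map_sum measurable_snd.aemeasurable, funext fun i => (hπ i).2]

lemma inv_smul_prod_mem_cpl [IsFiniteMeasure μ] [IsFiniteMeasure ν]
    (h : μ Set.univ = ν Set.univ) : (μ Set.univ)⁻¹ • μ.prod ν ∈ Cpl μ ν := by
  rcases eq_or_ne μ 0 with rfl | hμ
  · obtain rfl : ν = 0 := by simpa using h.symm
    simp [Cpl]
  · have hinv : (μ Set.univ)⁻¹ * μ Set.univ = 1 :=
      ENNReal.inv_mul_cancel (by simpa using hμ) (measure_ne_top _ _)
    constructor
    · rw [Measure.map_smul, Measure.map_fst_prod, smul_smul, ← h, hinv, one_smul]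
    · rw [Measure.map_smul, Measure.map_snd_prod, smul_smul, hinv, one_smul]

lemma Wp_self (hp : 0 < p) (hd : ∀ x, d x x = 0) (μ : Measure Y) : Wp p d μ μ = 0 := by
  have hcost : ∫⁻ z, d z.1 z.2 ^ p ∂μ.map (fun x => (x, x)) = 0 :=
    nonpos_iff_eq_zero.1 <|
    (lintegral_map_le (fun z : Y × Y => d z.1 z.2 ^ p) _).trans (by simp [hd, hp])
  have hW := Wp_le_of_mem_cpl (p := p) (d := d) (map_diag_mem_cpl μ)
  rw [hcost, ENNReal.zero_rpow_of_pos (one_div_pos.2 hp)] at hW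
  exact nonpos_iff_eq_zero.1 hW

lemma Wp_comm (hd : ∀ x y, d x y = d y x) (μ ν : Measure Y) : Wp p d μ ν = Wp p d ν μ := by
  have hle : ∀ μ ν : Measure Y, Wp p d μ ν ≤ Wp p d ν μ := fun μ ν => le_iInf₂ fun π hπ => by
    refine (Wp_le_of_mem_cpl (map_swap_mem_cpl hπ)).trans_eq ?_
    congr 1
    refine (lintegral_map_equiv (fun z : Y × Y => d z.1 z.2 ^ p) MeasurableEquiv.prodComm).trans
      (lintegral_congr fun z : Y × Y => ?_)
    rw [hd z.1 z.2]
    rfl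
  exact le_antisymm (hle μ ν) (hle ν μ)

lemma lintegral_rpow_dist_le (hp : 0 ≤ p) (hC : ∀ x y, d x y ≤ C) (π : Measure (Y × Y)) :
    ∫⁻ z, d z.1 z.2 ^ p ∂π ≤ C ^ p * π Set.univ :=
  (lintegral_mono fun z : Y × Y => ENNReal.rpow_le_rpow (hC z.1 z.2) hp).trans_eq
    (lintegral_const _)

lemma Wp_le_of_forall_le (hp : 0 < p) (hC : ∀ x y, d x y ≤ C) (μ ν : Measure Y)
    [IsProbabilityMeasure μ] [IsProbabilityMeasure ν] : Wp p d μ ν ≤ C := by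
  have hπ : μ.prod ν ∈ Cpl μ ν := ⟨Measure.fst_prod, Measure.snd_prod⟩
  calc Wp p d μ ν ≤ (∫⁻ z, d z.1 z.2 ^ p ∂μ.prod ν) ^ (1 / p) := Wp_le_of_mem_cpl hπ
    _ ≤ (C ^ p) ^ (1 / p) := by
      gcongr
      simpa using lintegral_rpow_dist_le hp.le hC (μ.prod ν)
    _ = C := by rw [one_div, ENNReal.rpow_rpow_inv hp.ne']

lemma exists_gluing_of_mem_cpl [StandardBorelSpace Y] [Nonempty Y]
    [IsProbabilityMeasure ν] {π₁ π₂ : Measure (Y × Y)} (h₁ : π₁ ∈ Cpl ν μ) (h₂ : π₂ ∈ Cpl ν ξ) :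
    ∃ γ : Measure (Y × Y × Y), γ.map (fun z => (z.1, z.2.1)) = π₁ ∧
      γ.map (fun z => (z.1, z.2.2)) = π₂ := by
  have := isProbabilityMeasure_of_mem_cpl h₁
  have := isProbabilityMeasure_of_mem_cpl h₂
  have hπ₁ : ν ⊗ₘ π₁.condKernel = π₁ := by simpa only [Measure.fst, h₁.1] using π₁.disintegrate _
  have hπ₂ : ν ⊗ₘ π₂.condKernel = π₂ := by simpa only [Measure.fst, h₂.1] using π₂.disintegrate _
  refine ⟨ν ⊗ₘ (π₁.condKernel ×ₖ π₂.condKernel), Eq.trans ?_ hπ₁, Eq.trans ?_ hπ₂⟩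
  · conv_rhs => rw [← Kernel.fst_prod π₁.condKernel π₂.condKernel, Kernel.fst_eq,
      Measure.compProd_map measurable_fst]
    rfl
  · conv_rhs => rw [← Kernel.snd_prod π₁.condKernel π₂.condKernel, Kernel.snd_eq,
      Measure.compProd_map measurable_snd]
    rfl

lemma Wp_triangle [StandardBorelSpace Y] [Nonempty Y] (hp : 1 ≤ p)
    (hd : Measurable fun z : Y × Y => d z.1 z.2) (hcomm : ∀ x y, d x y = d y x)
    (htri : ∀ x y z, d x z ≤ d x y + d y z) (μ ν ξ : Measure Y) [IsProbabilityMeasure ν]  :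
    Wp p d μ ξ ≤ Wp p d μ ν + Wp p d ν ξ := by
  rw [Wp_comm hcomm μ ν]
  refine ENNReal.le_iInf₂_add_iInf₂ fun π₁ h₁ π₂ h₂ => ?_
  obtain ⟨γ, rfl, rfl⟩ := exists_gluing_of_mem_cpl h₁ h₂
  have hπ : γ.map Prod.snd ∈ Cpl μ ξ := by
    rw [← h₁.2, ← h₂.2, Measure.map_map measurable_snd (by fun_prop),
      Measure.map_map measurable_snd (by fun_prop)]
    exact ⟨Measure.map_map measurable_fst measurable_snd,
      Measure.map_map measurable_snd measurable_snd⟩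
  have hd₁ : Measurable fun z : Y × Y × Y => d z.1 z.2.1 :=
    hd.comp (f := fun z : Y × Y × Y => (z.1, z.2.1)) (by fun_prop)
  have hd₂ : Measurable fun z : Y × Y × Y => d z.1 z.2.2 :=
    hd.comp (f := fun z : Y × Y × Y => (z.1, z.2.2)) (by fun_prop)
  rw [lintegral_map (hd.pow_const p) (by fun_prop), lintegral_map (hd.pow_const p) (by fun_prop)]
  calc Wp p d μ ξ ≤ (∫⁻ z, d z.2.1 z.2.2 ^ p ∂γ) ^ (1 / p) := by
        rw [← lintegral_map (hd.pow_const p) measurable_snd]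
        exact Wp_le_of_mem_cpl hπ
    _ ≤ (∫⁻ z, (d z.1 z.2.1 + d z.1 z.2.2) ^ p ∂γ) ^ (1 / p) := by
        gcongr with z
        rw [hcomm z.1 z.2.1]
        exact htri _ _ _
    _ ≤ _ := ENNReal.lintegral_Lp_add_le hd₁.aemeasurable hd₂.aemeasurable hp

lemma Wp_le_of_map_le (hp : 0 < p) (hC : ∀ x y, d x y ≤ C) [IsProbabilityMeasure μ]
    [IsProbabilityMeasure ν] (hfst : π.map Prod.fst ≤ μ) (hsnd : π.map Prod.snd ≤ ν) :
    Wp p d μ ν ≤ (∫⁻ z, d z.1 z.2 ^ p ∂π + C ^ p * (1 - π Set.univ)) ^ (1 / p) := by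
  have hπ : π ∈ Cpl (π.map Prod.fst) (π.map Prod.snd) := ⟨rfl, rfl⟩
  have hfst_univ := (measure_univ_of_mem_cpl hπ).symm
  have hsnd_univ := (measure_univ_of_mem_cpl (map_swap_mem_cpl hπ)).symm
  rw [Measure.map_apply measurable_swap .univ, Set.preimage_univ] at hsnd_univ
  have := isFiniteMeasure_of_le _ hfst
  have := isFiniteMeasure_of_le _ hsnd
  have hμ : (μ - π.map Prod.fst) Set.univ = 1 - π Set.univ := by
    rw [Measure.sub_apply .univ hfst, measure_univ, hfst_univ]
  have hν : (ν - π.map Prod.snd) Set.univ = 1 - π Set.univ := by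
    rw [Measure.sub_apply .univ hsnd, measure_univ, hsnd_univ]
  have hrest := inv_smul_prod_mem_cpl (hμ.trans hν.symm)
  have hcpl := add_mem_cpl hrest hπ
  rw [Measure.sub_add_cancel_of_le hfst, Measure.sub_add_cancel_of_le hsnd] at hcpl
  refine (Wp_le_of_mem_cpl hcpl).trans ?_
  rw [lintegral_add_measure, add_comm]
  gcongr
  exact (lintegral_rpow_dist_le hp.le hC _).trans_eq
    (by rw [measure_univ_of_mem_cpl hrest, hμ])

lemma smul_cond_le_restrict {A : Set Y} {c : ℝ≥0∞} (hc : c ≤ μ A) :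
    c • μ[|A] ≤ μ.restrict A := by
  rw [ProbabilityTheory.cond, smul_smul]
  refine Measure.le_iff.2 fun s _ => mul_le_of_le_one_left' ?_
  exact (mul_le_mul_left hc _).trans (ENNReal.mul_inv_le_one _)

lemma sum_smul_cond_le {A : ℕ → Set Y} (hA : ∀ i, MeasurableSet (A i))
    (hdisj : Pairwise (Function.onFun Disjoint A)) {c : ℕ → ℝ≥0∞} (hc : ∀ i, c i ≤ μ (A i)) :
    Measure.sum (fun i => c i • μ[|A i]) ≤ μ := by
  refine le_trans ?_ (Measure.restrict_le_self (s := ⋃ i, A i))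
  rw [Measure.restrict_iUnion hdisj hA]
  refine Measure.le_iff.2 fun s hs => ?_
  rw [Measure.sum_apply _ hs, Measure.sum_apply _ hs]
  exact ENNReal.tsum_le_tsum fun i => smul_cond_le_restrict (hc i) s

lemma smul_cond_prod_cond_mem_cpl [IsFiniteMeasure μ] [IsFiniteMeasure ν] {A : Set Y} {c : ℝ≥0∞}
    (hμ : c ≤ μ A) (hν : c ≤ ν A) : c • (μ[|A]).prod ν[|A] ∈ Cpl (c • μ[|A]) (c • ν[|A]) := by
  rcases eq_or_ne c 0 with rfl | hc
  · simp [Cpl]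
  · have := cond_isProbabilityMeasure ((pos_iff_ne_zero.2 hc).trans_le hμ).ne'
    have := cond_isProbabilityMeasure ((pos_iff_ne_zero.2 hc).trans_le hν).ne'
    constructor
    · rw [Measure.map_smul, Measure.map_fst_prod, measure_univ, one_smul]
    · rw [Measure.map_smul, Measure.map_snd_prod, measure_univ, one_smul]

lemma smul_cond_univ [IsFiniteMeasure μ] {A : Set Y} {c : ℝ≥0∞} (hc : c ≤ μ A) :
    (c • μ[|A]) Set.univ = c := by
  rcases eq_or_ne c 0 with rfl | hc₀
  · simp
  · have := cond_isProbabilityMeasure ((pos_iff_ne_zero.2 hc₀).trans_le hc).ne'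
    simp

lemma Wp_le_of_partition (hp : 0 < p) (hC : ∀ x y, d x y ≤ C) (μ ν : Measure Y)
    [IsProbabilityMeasure μ] [IsProbabilityMeasure ν] {A : ℕ → Set Y}
    (hA : ∀ i, MeasurableSet (A i)) (hdisj : Pairwise (Function.onFun Disjoint A))
    (hr : ∀ i, ∀ x ∈ A i, ∀ y ∈ A i, d x y ≤ r) :
    Wp p d μ ν ≤ (r ^ p + C ^ p * (1 - ∑' i, min (μ (A i)) (ν (A i)))) ^ (1 / p) := by
  let c : ℕ → ℝ≥0∞ := fun i => min (μ (A i)) (ν (A i))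
  have hcμ : ∀ i, c i ≤ μ (A i) := fun i => min_le_left _ _
  have hcν : ∀ i, c i ≤ ν (A i) := fun i => min_le_right _ _
  -- The mass common to `μ` and `ν` on a cell is transported inside that cell.
  let π : Measure (Y × Y) := Measure.sum fun i => c i • (μ[|A i]).prod (ν[|A i])
  have hπ : π ∈ Cpl (.sum fun i => c i • μ[|A i]) (.sum fun i => c i • ν[|A i]) :=
    sum_mem_cpl fun i => smul_cond_prod_cond_mem_cpl (hcμ i) (hcν i)
  have hfst : π.map Prod.fst ≤ μ := hπ.1.trans_le (sum_smul_cond_le hA hdisj hcμ)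
  have hsnd : π.map Prod.snd ≤ ν := hπ.2.trans_le (sum_smul_cond_le hA hdisj hcν)
  have hπ_univ : π Set.univ = ∑' i, c i := by
    rw [measure_univ_of_mem_cpl hπ, Measure.sum_apply _ .univ]
    exact tsum_congr fun i => smul_cond_univ (hcμ i)
  have hπ_le : π Set.univ ≤ 1 := by
    calc π Set.univ = π.map Prod.fst Set.univ := by
          rw [Measure.map_apply measurable_fst .univ, Set.preimage_univ]
      _ ≤ 1 := (hfst _).trans prob_le_one
  have hdist : ∀ᵐ z ∂π, d z.1 z.2 ^ p ≤ r ^ p := Measure.ae_sum_iff.2 fun i => by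
    refine Measure.ae_smul_measure ?_ _
    filter_upwards [Measure.quasiMeasurePreserving_fst.ae (ae_cond_mem (hA i)),
      Measure.quasiMeasurePreserving_snd.ae (ae_cond_mem (hA i))] with z hz₁ hz₂
    exact ENNReal.rpow_le_rpow (hr i _ hz₁ _ hz₂) hp.le
  refine (Wp_le_of_map_le hp hC hfst hsnd).trans ?_
  rw [hπ_univ]
  gcongr
  calc ∫⁻ z, d z.1 z.2 ^ p ∂π ≤ r ^ p * π Set.univ :=
        (lintegral_mono_ae hdist).trans_eq (lintegral_const _)
    _ ≤ r ^ p := mul_le_of_le_one_right' hπ_le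

end Wasserstein

section WassersteinTopology

variable {Y : Type*} [MeasurableSpace Y] {p : ℝ} {C : ℝ≥0∞}

lemma exists_null_frontier_partition [PseudoMetricSpace Y] [TopologicalSpace.SeparableSpace Y]
    [Nonempty Y] [OpensMeasurableSpace Y] (μ : Measure Y) [SFinite μ] {δ : ℝ} (hδ : 0 < δ) :
    ∃ A : ℕ → Set Y, (∀ i, MeasurableSet (A i)) ∧ Pairwise (Function.onFun Disjoint A) ∧
      ⋃ i, A i = Set.univ ∧ (∀ i, ∀ x ∈ A i, ∀ y ∈ A i, edist x y ≤ ENNReal.ofReal δ) ∧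
      ∀ i, μ (frontier (A i)) = 0 := by
  let x := TopologicalSpace.denseSeq Y
  choose r hr hr_frontier using fun n =>
    exists_null_frontier_thickening μ {x n} (by linarith : δ / 4 < δ / 2)
  simp only [Metric.thickening_singleton] at hr_frontier
  let B : ℕ → Set Y := fun n => Metric.ball (x n) (r n)
  refine ⟨disjointed B, fun i => .disjointed (fun n => Metric.isOpen_ball.measurableSet) i,
    disjoint_disjointed B, ?_, fun i y hy z hz => ?_, fun i => ?_⟩
  · refine iUnion_disjointed.trans (Set.eq_univ_of_forall fun y => Set.mem_iUnion.2 ?_)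
    obtain ⟨n, hn⟩ := (TopologicalSpace.denseRange_denseSeq Y).exists_dist_lt y
      (by positivity : 0 < δ / 4)
    exact ⟨n, hn.trans (hr n).1⟩
  · have hy' : dist y (x i) < r i := disjointed_subset B i hy
    have hz' : dist z (x i) < r i := disjointed_subset B i hz
    rw [edist_dist]
    exact ENNReal.ofReal_le_ofReal (by linarith [dist_triangle_right y z (x i), (hr i).2])
  · refine disjointedRec (p := fun t => μ (frontier t) = 0) (fun t j ht => ?_) (hr_frontier i)
    refine measure_mono_null (frontier_inter_subset t (B j)ᶜ) (measure_union_null ?_ ?_)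
    · exact measure_mono_null Set.inter_subset_left ht
    · rw [frontier_compl]
      exact measure_mono_null Set.inter_subset_right (hr_frontier j)

lemma tendsto_tsum_min_measure [TopologicalSpace Y] [OpensMeasurableSpace Y]
    [HasOuterApproxClosed Y] (μ : ProbabilityMeasure Y) {A : ℕ → Set Y}
    (hA : ∀ i, MeasurableSet (A i)) (hdisj : Pairwise (Function.onFun Disjoint A))
    (hcover : ⋃ i, A i = Set.univ) (hfrontier : ∀ i, (μ : Measure Y) (frontier (A i)) = 0) :
    Tendsto (fun ν : ProbabilityMeasure Y =>
      ∑' i, min ((μ : Measure Y) (A i)) ((ν : Measure Y) (A i))) (𝓝 μ) (𝓝 1) := by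
  have hsum : ∑' i, (μ : Measure Y) (A i) = 1 := by
    rw [← measure_iUnion hdisj hA, hcover, measure_univ]
  refine tendsto_order.2 ⟨fun a ha => ?_, fun a ha => .of_forall fun ν => lt_of_le_of_lt ?_ ha⟩
  · rw [← hsum, ENNReal.tsum_eq_iSup_sum] at ha
    obtain ⟨I, hI⟩ := lt_iSup_iff.1 ha
    have hlim : Tendsto (fun ν : ProbabilityMeasure Y =>
        ∑ i ∈ I, min ((μ : Measure Y) (A i)) ((ν : Measure Y) (A i))) (𝓝 μ)
        (𝓝 (∑ i ∈ I, (μ : Measure Y) (A i))) := tendsto_finsetSum I fun i _ => by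
      simpa only [min_self, id] using (tendsto_const_nhds (x := (μ : Measure Y) (A i))).min
        (ProbabilityMeasure.tendsto_measure_of_null_frontier_of_tendsto' tendsto_id (hfrontier i))
    filter_upwards [hlim.eventually_const_lt hI] with ν hν
    exact hν.trans_le (ENNReal.sum_le_tsum I)
  · exact (ENNReal.tsum_le_tsum fun i => min_le_left _ _).trans_eq hsum

lemma tendsto_Wp_edist [PseudoMetricSpace Y] [SecondCountableTopology Y] [OpensMeasurableSpace Y]
    (hp : 0 < p) (hC : C ≠ ∞) (hbdd : ∀ x y : Y, edist x y ≤ C) (μ : ProbabilityMeasure Y) :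
    Tendsto (fun ν : ProbabilityMeasure Y => Wp p edist (μ : Measure Y) (ν : Measure Y))
      (𝓝 μ) (𝓝 0) := by
  have : Nonempty Y := nonempty_of_isProbabilityMeasure (μ : Measure Y)
  refine tendsto_order.2 ⟨fun a ha => absurd ha ENNReal.not_lt_zero, fun ε hε => ?_⟩
  obtain ⟨δ, hδ, hδε⟩ := ENNReal.lt_iff_exists_nnreal_btwn.1 hε
  obtain ⟨A, hA, hdisj, hcover, hdiam, hfrontier⟩ := exists_null_frontier_partition
    (μ : Measure Y) (NNReal.coe_pos.2 (ENNReal.coe_pos.1 hδ))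
  simp only [ENNReal.ofReal_coe_nnreal] at hdiam
  have hlim : Tendsto (fun s : ℝ≥0∞ => ((δ : ℝ≥0∞) ^ p + C ^ p * (1 - s)) ^ (1 / p))
      (𝓝 1) (𝓝 δ) := by
    have hCp : C ^ p ≠ ∞ := ENNReal.rpow_ne_top_of_nonneg hp.le hC
    have hcont : Continuous fun s : ℝ≥0∞ => ((δ : ℝ≥0∞) ^ p + C ^ p * (1 - s)) ^ (1 / p) :=
      ENNReal.continuous_rpow_const.comp (continuous_const.add
        ((ENNReal.continuous_const_mul hCp).comp (ENNReal.continuous_sub_left ENNReal.one_ne_top)))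
    simpa [ENNReal.rpow_rpow_inv hp.ne'] using hcont.tendsto 1
  have hbound := hlim.comp (tendsto_tsum_min_measure μ hA hdisj hcover hfrontier)
  filter_upwards [hbound.eventually_lt_const hδε] with ν hν
  exact (Wp_le_of_partition hp hbdd _ _ hA hdisj hdiam).trans_lt hν

lemma lintegral_le_lintegral_rpow {π : Measure Y} [IsProbabilityMeasure π] (hp : 1 ≤ p)
    {f : Y → ℝ≥0∞} (hf : Measurable f) : ∫⁻ y, f y ∂π ≤ (∫⁻ y, f y ^ p ∂π) ^ (1 / p) := by
  simpa [eLpNorm'] using eLpNorm'_le_eLpNorm'_of_exponent_le one_pos hp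
    (μ := π) hf.stronglyMeasurable.aestronglyMeasurable

lemma edist_integral_le_mul_Wp [PseudoEMetricSpace Y] [SecondCountableTopology Y]
    [OpensMeasurableSpace Y] (hp : 1 ≤ p) {f : Y → ℝ} {L : NNReal} (hL : L ≠ 0)
    (hf : LipschitzWith L f) {μ ν : Measure Y} [IsProbabilityMeasure μ] (hμ : Integrable f μ)
    (hν : Integrable f ν) :
    edist (∫ y, f y ∂μ) (∫ y, f y ∂ν) ≤ L * Wp p edist μ ν := by
  have hL₀ : (L : ℝ≥0∞) ≠ 0 := by simpa using hL
  rw [mul_comm, ← ENNReal.div_le_iff_le_mul (.inl hL₀) (.inl ENNReal.coe_ne_top)]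
  refine le_iInf₂ fun π hπ => ?_
  rw [ENNReal.div_le_iff_le_mul (.inl hL₀) (.inl ENNReal.coe_ne_top), mul_comm]
  have := isProbabilityMeasure_of_mem_cpl hπ
  obtain ⟨rfl, rfl⟩ := hπ
  have hdist : Measurable fun z : Y × Y => edist z.1 z.2 := measurable_fst.edist measurable_snd
  have hsub := integral_sub (hμ.comp_measurable measurable_fst) (hν.comp_measurable measurable_snd)
  simp only [Function.comp_apply] at hsub
  rw [integral_map measurable_fst.aemeasurable hμ.1, integral_map measurable_snd.aemeasurable hν.1,
    edist_eq_enorm_sub, ← hsub]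
  calc ‖∫ z, (f z.1 - f z.2) ∂π‖ₑ ≤ ∫⁻ z, ‖f z.1 - f z.2‖ₑ ∂π :=
        enorm_integral_le_lintegral_enorm _
    _ ≤ ∫⁻ z, L * edist z.1 z.2 ∂π := lintegral_mono fun z : Y × Y => by
        rw [← edist_eq_enorm_sub]
        exact hf z.1 z.2
    _ = L * ∫⁻ z, edist z.1 z.2 ∂π := lintegral_const_mul _ hdist
    _ ≤ L * (∫⁻ z, edist z.1 z.2 ^ p ∂π) ^ (1 / p) := by
        gcongr
        exact lintegral_le_lintegral_rpow hp hdist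

lemma comap_Wp_edist_le_nhds [PseudoEMetricSpace Y] [SecondCountableTopology Y]
    [BorelSpace Y] (hp : 1 ≤ p) (μ : ProbabilityMeasure Y) :
    comap (fun ν : ProbabilityMeasure Y => Wp p edist (μ : Measure Y) (ν : Measure Y)) (𝓝 0)
      ≤ 𝓝 μ := by
  refine tendsto_id'.1 (tendsto_iff_forall_lipschitz_integral_tendsto.2 ?_)
  rintro f ⟨C, hC⟩ ⟨L, hL⟩
  have hf : LipschitzWith (L + 1) f := hL.weaken le_self_add
  have hint : ∀ ν : ProbabilityMeasure Y, Integrable f (ν : Measure Y) := fun ν =>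
    (BoundedContinuousFunction.mkOfBound ⟨f, hL.continuous⟩ C hC).integrable _
  have hbound : Tendsto (fun ν : ProbabilityMeasure Y =>
      ((L + 1 : NNReal) : ℝ≥0∞) * Wp p edist (μ : Measure Y) (ν : Measure Y))
      (comap (fun ν : ProbabilityMeasure Y => Wp p edist (μ : Measure Y) (ν : Measure Y)) (𝓝 0))
      (𝓝 0) := by
    simpa only [mul_zero] using
      ENNReal.Tendsto.const_mul (b := 0) tendsto_comap (.inr ENNReal.coe_ne_top)
  refine tendsto_iff_edist_tendsto_0.2 (tendsto_of_tendsto_of_tendsto_of_le_of_le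
    tendsto_const_nhds hbound (fun _ => zero_le) fun ν => ?_)
  rw [edist_comm]
  exact edist_integral_le_mul_Wp hp (by positivity) hf (hint μ) (hint ν)

end WassersteinTopology

/-! ### Distances that metrize a topology -/

/-- The axioms of an extended semimetric without separation and triangle inequality; this is all
that the recursive distance on the nested space satisfies without further assumptions. -/
structure IsSemidist {Z : Type*} (d : Z → Z → ℝ≥0∞) : Prop where
  self : ∀ x, d x x = 0
  comm : ∀ x y, d x y = d y x

lemma IsSemidist.comp {Y Z : Type*} {d : Z → Z → ℝ≥0∞} (h : IsSemidist d) (f : Y → Z) :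
    IsSemidist fun x y => d (f x) (f y) :=
  ⟨fun _ => h.self _, fun _ _ => h.comm _ _⟩

lemma IsSemidist.prodDist {Y Z : Type*} {d : Y → Y → ℝ≥0∞} {e : Z → Z → ℝ≥0∞} {p : ℝ}
    (hp : 0 < p) (hd : IsSemidist d) (he : IsSemidist e) : IsSemidist (prodDist p d e) where
  self x := by simp [AWPaper.prodDist, hd.self, he.self, hp]
  comm x y := by simp only [AWPaper.prodDist, hd.comm x.1, he.comm x.2]

lemma IsSemidist.wp {Z : Type*} [MeasurableSpace Z] {d : Z → Z → ℝ≥0∞} {p : ℝ} (hp : 0 < p)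
    (hd : IsSemidist d) : IsSemidist (Wp p d) :=
  ⟨Wp_self hp hd.self, Wp_comm hd.comm⟩

/-- `d` is a bounded pseudometric, with values in `[0, ∞]`, which induces the given topology. It is
kept apart from the `PseudoMetricSpace` class because the Wasserstein distance is not an instance
on probability measures. -/
structure IsBoundedMetrization {Y : Type*} [TopologicalSpace Y] (d : Y → Y → ℝ≥0∞) : Prop
    extends IsSemidist d where
  triangle : ∀ x y z, d x z ≤ d x y + d y z
  bounded : ∃ C ≠ ∞, ∀ x y, d x y ≤ C
  nhds_eq : ∀ x, 𝓝 x = comap (d x) (𝓝 0)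

lemma nhds_eq_comap_edist {Y : Type*} [PseudoEMetricSpace Y] (x : Y) :
    𝓝 x = comap (edist x) (𝓝 0) := by
  refine Metric.nhds_basis_eball.eq_of_same_basis ?_
  convert ENNReal.nhds_zero_basis.comap (edist x) using 2 with ε
  ext y
  simp [edist_comm]

lemma isBoundedMetrization_edist {Y : Type*} [PseudoEMetricSpace Y] {C : ℝ≥0∞} (hC : C ≠ ∞)
    (hbdd : ∀ x y : Y, edist x y ≤ C) : IsBoundedMetrization (edist : Y → Y → ℝ≥0∞) where
  self := edist_self
  comm := edist_comm
  triangle := edist_triangle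
  bounded := ⟨C, hC, hbdd⟩
  nhds_eq := nhds_eq_comap_edist

namespace IsBoundedMetrization

variable {Y : Type*} [t : TopologicalSpace Y] {d : Y → Y → ℝ≥0∞} {p : ℝ}

lemma exists_pseudoMetricSpace (hd : IsBoundedMetrization d) :
    ∃ M : PseudoMetricSpace Y, M.toUniformSpace.toTopologicalSpace = t ∧ @edist Y _ = d := by
  obtain ⟨C, hC, hbdd⟩ := hd.bounded
  let M₀ : PseudoEMetricSpace Y :=
    { edist := d, edist_self := hd.self, edist_comm := hd.comm, edist_triangle := hd.triangle }
  refine ⟨PseudoEMetricSpace.toPseudoMetricSpace fun x y => ne_top_of_le_ne_top hC (hbdd x y),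
    TopologicalSpace.ext_nhds fun x => ?_, rfl⟩
  exact (@nhds_eq_comap_edist Y M₀ x).trans (hd.nhds_eq x).symm

lemma measurable [SecondCountableTopology Y] [MeasurableSpace Y] [OpensMeasurableSpace Y]
    (hd : IsBoundedMetrization d) : Measurable fun z : Y × Y => d z.1 z.2 := by
  obtain ⟨M, rfl, rfl⟩ := hd.exists_pseudoMetricSpace
  exact measurable_fst.edist measurable_snd

lemma ballTop_eq (hd : IsBoundedMetrization d) : ballTop d = t := by
  refine le_antisymm (TopologicalSpace.le_def.2 fun s hs => ?_) (le_generateFrom ?_)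
  · refine (@isOpen_iff_mem_nhds Y (ballTop d) s).2 fun x hx => ?_
    obtain ⟨ε, hε, hεs⟩ := (ENNReal.nhds_zero_basis.comap (d x)).mem_iff.1
      ((hd.nhds_eq x).ge (hs.mem_nhds hx))
    have hball : IsOpen[ballTop d] {y | d x y < ε} :=
      TopologicalSpace.isOpen_generateFrom_of_mem ⟨x, ε, hε, rfl⟩
    exact mem_of_superset (@IsOpen.mem_nhds Y (ballTop d) _ _ hball ((hd.self x).trans_lt hε)) hεs
  · rintro _ ⟨x, ε, -, rfl⟩
    obtain ⟨M, rfl, rfl⟩ := hd.exists_pseudoMetricSpace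
    exact isOpen_lt (continuous_const.edist continuous_id) continuous_const

end IsBoundedMetrization

section

variable {p : ℝ}

lemma le_rpow_add_rpow_left (hp : 0 < p) (a b : ℝ≥0∞) : a ≤ (a ^ p + b ^ p) ^ (1 / p) :=
  calc a = (a ^ p) ^ (1 / p) := by rw [one_div, ENNReal.rpow_rpow_inv hp.ne']
    _ ≤ (a ^ p + b ^ p) ^ (1 / p) := by gcongr; exact le_self_add

lemma le_rpow_add_rpow_right (hp : 0 < p) (a b : ℝ≥0∞) : b ≤ (a ^ p + b ^ p) ^ (1 / p) := by
  rw [add_comm]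
  exact le_rpow_add_rpow_left hp b a

lemma rpow_add_rpow_add_le (hp : 1 ≤ p) (a a' b b' : ℝ≥0∞) :
    ((a + a') ^ p + (b + b') ^ p) ^ (1 / p) ≤
      (a ^ p + b ^ p) ^ (1 / p) + (a' ^ p + b' ^ p) ^ (1 / p) := by
  simpa [Fin.sum_univ_two] using ENNReal.Lp_add_le Finset.univ ![a, b] ![a', b'] hp

lemma tendsto_rpow_add_rpow {ι : Type*} {l : Filter ι} {f g : ι → ℝ≥0∞} (hp : 0 < p)
    (hf : Tendsto f l (𝓝 0)) (hg : Tendsto g l (𝓝 0)) :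
    Tendsto (fun i => (f i ^ p + g i ^ p) ^ (1 / p)) l (𝓝 0) := by
  simpa [hp] using ((hf.ennrpow_const p).add (hg.ennrpow_const p)).ennrpow_const (1 / p)

end

namespace IsBoundedMetrization

variable {Y Z : Type*} [TopologicalSpace Y] [TopologicalSpace Z] {d : Y → Y → ℝ≥0∞}
  {e : Z → Z → ℝ≥0∞} {p : ℝ}

lemma prodDist (hp : 1 ≤ p) (hd : IsBoundedMetrization d) (he : IsBoundedMetrization e) :
    IsBoundedMetrization (prodDist p d e) where
  toIsSemidist := hd.toIsSemidist.prodDist (by positivity) he.toIsSemidist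
  triangle x y z := by
    refine le_trans ?_ (rpow_add_rpow_add_le hp _ _ _ _)
    unfold AWPaper.prodDist
    gcongr
    exacts [hd.triangle _ _ _, he.triangle _ _ _]
  bounded := by
    have hp₀ : 0 ≤ p := by positivity
    obtain ⟨C, hC, hdC⟩ := hd.bounded
    obtain ⟨C', hC', heC'⟩ := he.bounded
    refine ⟨(C ^ p + C' ^ p) ^ (1 / p), by simp [*], fun x y => ?_⟩
    unfold AWPaper.prodDist
    gcongr
    exacts [hdC _ _, heC' _ _]
  nhds_eq x := by
    have hp₀ : 0 < p := by positivity
    rw [nhds_prod_eq, hd.nhds_eq, he.nhds_eq, Filter.prod_eq_inf, comap_comap, comap_comap]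
    refine le_antisymm (tendsto_iff_comap.1 ?_) (le_inf (tendsto_iff_comap.1 ?_)
      (tendsto_iff_comap.1 ?_))
    · exact tendsto_rpow_add_rpow hp₀ (tendsto_comap.mono_left inf_le_left)
        (tendsto_comap.mono_left inf_le_right)
    · exact tendsto_of_tendsto_of_tendsto_of_le_of_le tendsto_const_nhds tendsto_comap
        (fun _ => zero_le) fun y => le_rpow_add_rpow_left hp₀ _ _
    · exact tendsto_of_tendsto_of_tendsto_of_le_of_le tendsto_const_nhds tendsto_comap
        (fun _ => zero_le) fun y => le_rpow_add_rpow_right hp₀ _ _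

lemma wp [SecondCountableTopology Y] [MeasurableSpace Y] [BorelSpace Y] [StandardBorelSpace Y]
    [Nonempty Y] (hp : 1 ≤ p) (hd : IsBoundedMetrization d) :
    IsBoundedMetrization fun μ ν : ProbabilityMeasure Y => Wp p d (μ : Measure Y) ν where
  toIsSemidist := (hd.toIsSemidist.wp (by positivity)).comp _
  triangle μ ν ξ := Wp_triangle hp hd.measurable hd.comm hd.triangle _ _ _
  bounded := by
    obtain ⟨C, hC, hbdd⟩ := hd.bounded
    exact ⟨C, hC, fun μ ν => Wp_le_of_forall_le (by positivity) hbdd _ _⟩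
  nhds_eq μ := by
    obtain ⟨C, hC, hbdd⟩ := hd.bounded
    obtain ⟨M, rfl, rfl⟩ := hd.exists_pseudoMetricSpace
    exact le_antisymm (tendsto_Wp_edist (by positivity) hC hbdd μ).le_comap
      (comap_Wp_edist_le_nhds hp μ)

end IsBoundedMetrization

/-! ### Isolated isometries -/

/-- `ι` carries `d` to `D` and its range has infinite `D`-distance to its complement. Such maps
embed the spaces on which the distances are genuine metrics into the nested space. -/
structure IsIsolatedIsometry {Y Z : Type*} (ι : Y → Z) (d : Y → Y → ℝ≥0∞) (D : Z → Z → ℝ≥0∞) :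
    Prop where
  isSemidist : IsSemidist D
  isometry : ∀ a b, D (ι a) (ι b) = d a b
  mem_range : ∀ {a z}, D (ι a) z ≠ ∞ → z ∈ Set.range ι

section CouplingImage

variable {Y Z : Type*} [MeasurableSpace Y] [MeasurableSpace Z] {μ ν : Measure Y} {ι : Y → Z}

lemma map_prodMap_mem_cpl (hι : Measurable ι) {π : Measure (Y × Y)} (hπ : π ∈ Cpl μ ν) :
    π.map (Prod.map ι ι) ∈ Cpl (μ.map ι) (ν.map ι) := by
  constructor
  · rw [← hπ.1, Measure.map_map measurable_fst (hι.prodMap hι), Measure.map_map hι measurable_fst]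
    rfl
  · rw [← hπ.2, Measure.map_map measurable_snd (hι.prodMap hι), Measure.map_map hι measurable_snd]
    rfl

lemma exists_mem_cpl_map_prodMap_eq (hι : MeasurableEmbedding ι) {π : Measure (Z × Z)}
    (hπ : π ∈ Cpl (μ.map ι) (ν.map ι)) : ∃ π' ∈ Cpl μ ν, π'.map (Prod.map ι ι) = π := by
  have hιι : MeasurableEmbedding (Prod.map ι ι) := hι.prodMap hι
  have hrange (ξ : Measure Y) : ∀ᵐ z ∂ξ.map ι, z ∈ Set.range ι :=
    hι.ae_map_iff.2 (ae_of_all _ Set.mem_range_self)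
  have hπ_range : ∀ᵐ z ∂π, z ∈ Set.range (Prod.map ι ι) := by
    filter_upwards [ae_of_ae_map measurable_fst.aemeasurable (hπ.1 ▸ hrange μ),
      ae_of_ae_map measurable_snd.aemeasurable (hπ.2 ▸ hrange ν)] with z hz₁ hz₂
    exact Set.range_prodMap ▸ ⟨hz₁, hz₂⟩
  have hπ_map : (π.comap (Prod.map ι ι)).map (Prod.map ι ι) = π := by
    rw [hιι.map_comap, Measure.restrict_eq_self_of_ae_mem hπ_range]
  have hinj : Function.Injective fun m : Measure Y => m.map ι :=
    (measurableEmbedding_measure_map hι).injective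
  have himage := map_prodMap_mem_cpl hι.measurable
    (show π.comap (Prod.map ι ι) ∈ Cpl _ _ from ⟨rfl, rfl⟩)
  rw [hπ_map] at himage
  exact ⟨_, ⟨hinj (himage.1.symm.trans hπ.1), hinj (himage.2.symm.trans hπ.2)⟩, hπ_map⟩

lemma Wp_map_map (hι : MeasurableEmbedding ι) (p : ℝ) (D : Z → Z → ℝ≥0∞) (μ ν : Measure Y) :
    Wp p D (μ.map ι) (ν.map ι) = Wp p (fun a b => D (ι a) (ι b)) μ ν := by
  have hcost (π : Measure (Y × Y)) : ∫⁻ z, D z.1 z.2 ^ p ∂π.map (Prod.map ι ι) =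
      ∫⁻ z, D (ι z.1) (ι z.2) ^ p ∂π := (hι.prodMap hι).lintegral_map _
  refine le_antisymm (le_iInf₂ fun π hπ => ?_) (le_iInf₂ fun π hπ => ?_)
  · exact hcost π ▸ Wp_le_of_mem_cpl (map_prodMap_mem_cpl hι.measurable hπ)
  · obtain ⟨π', hπ', rfl⟩ := exists_mem_cpl_map_prodMap_eq hι hπ
    exact (hcost π').symm ▸ Wp_le_of_mem_cpl hπ'

lemma exists_mem_cpl_lintegral_ne_top {d : Y → Y → ℝ≥0∞} {p : ℝ} (hp : 0 < p)
    (h : Wp p d μ ν ≠ ∞) : ∃ π ∈ Cpl μ ν, ∫⁻ z, d z.1 z.2 ^ p ∂π ≠ ∞ := by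
  by_contra! htop
  exact h (iInf₂_eq_top.2 fun π hπ => by simp [htop π hπ, hp])

lemma measure_compl_range_eq_zero_of_Wp_ne_top {D : Z → Z → ℝ≥0∞} {p : ℝ} (hp : 0 < p)
    (hι : MeasurableEmbedding ι) (hD : ∀ {a z}, D (ι a) z ≠ ∞ → z ∈ Set.range ι) {m : Measure Z}
    (h : Wp p D (μ.map ι) m ≠ ∞) : m (Set.range ι)ᶜ = 0 := by
  obtain ⟨π, hπ, hfin⟩ := exists_mem_cpl_lintegral_ne_top hp h
  have hfst : ∀ᵐ z ∂π, z.1 ∈ Set.range ι := ae_of_ae_map measurable_fst.aemeasurable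
    (hπ.1 ▸ hι.ae_map_iff.2 (ae_of_all _ Set.mem_range_self))
  have hS : MeasurableSet (Prod.snd ⁻¹' (Set.range ι)ᶜ : Set (Z × Z)) :=
    measurable_snd hι.measurableSet_range.compl
  have hle : ∞ * π (Prod.snd ⁻¹' (Set.range ι)ᶜ) ≤ ∫⁻ z, D z.1 z.2 ^ p ∂π := by
    rw [← lintegral_indicator_const hS]
    refine lintegral_mono_ae ?_
    filter_upwards [hfst] with z ⟨y, hy⟩
    refine Set.indicator_apply_le' (fun hz => ?_) (fun _ => zero_le)
    have htop : D z.1 z.2 = ∞ := by_contra fun h => hz (hD (hy ▸ h))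
    simp [htop, hp]
  rw [← hπ.2, Measure.map_apply measurable_snd hι.measurableSet_range.compl]
  by_contra hne
  exact hfin (top_le_iff.1 (ENNReal.top_mul hne ▸ hle))

end CouplingImage

namespace IsIsolatedIsometry

variable {Y Z : Type*} {ι : Y → Z} {d : Y → Y → ℝ≥0∞} {D : Z → Z → ℝ≥0∞} {p : ℝ}

lemma prodDist {W : Type*} {e : W → W → ℝ≥0∞} (h : IsIsolatedIsometry ι d D) (hp : 0 < p)
    (he : IsSemidist e) :
    IsIsolatedIsometry (Prod.map id ι) (prodDist p e d) (prodDist p e D) where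
  isSemidist := he.prodDist hp h.isSemidist
  isometry a b := by simp [AWPaper.prodDist, h.isometry]
  mem_range {a z} hz := by
    have hne : D (ι a.2) z.2 ≠ ∞ := ne_top_of_le_ne_top hz (le_rpow_add_rpow_right hp _ _)
    obtain ⟨y, hy⟩ := h.mem_range hne
    exact ⟨(z.1, y), Prod.ext rfl hy⟩

lemma wp [MeasurableSpace Y] [MeasurableSpace Z] (h : IsIsolatedIsometry ι d D)
    (hι : MeasurableEmbedding ι) (hp : 0 < p) :
    IsIsolatedIsometry (fun μ : ProbabilityMeasure Y => (μ : Measure Y).map ι)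
      (fun μ ν => Wp p d (μ : Measure Y) ν) (Wp p D) where
  isSemidist := h.isSemidist.wp hp
  isometry μ ν := by simp only [Wp_map_map hι, h.isometry]
  mem_range {μ m} hm := by
    rw [range_probabilityMeasure_coe_map hι]
    obtain ⟨π, hπ, -⟩ := exists_mem_cpl_lintegral_ne_top hp hm
    have := Measure.isProbabilityMeasure_map (μ := (μ : Measure Y)) hι.measurable.aemeasurable
    have := isProbabilityMeasure_of_mem_cpl hπ
    have hm_prob : IsProbabilityMeasure m :=
      hπ.2 ▸ Measure.isProbabilityMeasure_map measurable_snd.aemeasurable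
    exact ⟨hm_prob, measure_compl_range_eq_zero_of_Wp_ne_top hp hι h.mem_range hm⟩

lemma codRestrict (h : IsIsolatedIsometry ι d D) {P : Z → Prop} (hP : ∀ y, P (ι y)) :
    IsIsolatedIsometry (fun y => (⟨ι y, hP y⟩ : {z // P z})) d (fun z w => D z.1 w.1) where
  isSemidist := h.isSemidist.comp _
  isometry := h.isometry
  mem_range hz := by
    obtain ⟨y, hy⟩ := h.mem_range hz
    exact ⟨y, Subtype.ext hy⟩

lemma preimage_ball (h : IsIsolatedIsometry ι d D) (z : Z) (ε : ℝ≥0∞) :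
    ι ⁻¹' {w | D z w < ε} = ∅ ∨ ∃ y, ι ⁻¹' {w | D z w < ε} = {y' | d y y' < ε} := by
  by_cases hz : z ∈ Set.range ι
  · obtain ⟨y, rfl⟩ := hz
    exact .inr ⟨y, by simp [h.isometry]⟩
  · refine .inl (Set.eq_empty_of_forall_notMem fun y hy => hz (h.mem_range (a := y) ?_))
    rw [h.isSemidist.comm]
    exact (show D z (ι y) < ε from hy).ne_top

lemma isClosedEmbedding [TopologicalSpace Y] [T0Space Y] (h : IsIsolatedIsometry ι d D)
    (hd : IsBoundedMetrization d) : @IsClosedEmbedding Y Z _ (ballTop D) ι := by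
  let _ : TopologicalSpace Z := ballTop D
  have hball (z : Z) {ε : ℝ≥0∞} (hε : 0 < ε) : IsOpen {w | D z w < ε} :=
    TopologicalSpace.isOpen_generateFrom_of_mem ⟨z, ε, hε, rfl⟩
  have hind : IsInducing ι := by
    refine ⟨le_antisymm (Continuous.le_induced (continuous_generateFrom_iff.2 ?_)) ?_⟩
    · rintro _ ⟨z, ε, hε, rfl⟩
      obtain hempty | ⟨y, hy⟩ := h.preimage_ball z ε
      · exact hempty ▸ isOpen_empty
      · rw [hy, ← hd.ballTop_eq]
        exact TopologicalSpace.isOpen_generateFrom_of_mem ⟨y, ε, hε, rfl⟩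
    · rw [← hd.ballTop_eq]
      refine le_generateFrom ?_
      rintro _ ⟨y, ε, hε, rfl⟩
      exact isOpen_induced_iff.2 ⟨_, hball (ι y) hε, by simp [h.isometry]⟩
  refine ⟨hind.isEmbedding, ⟨isOpen_iff_forall_mem_open.2 fun z hz => ?_⟩⟩
  refine ⟨_, ?_, hball z one_pos, (h.isSemidist.self z).trans_lt one_pos⟩
  rintro _ hlt ⟨y, rfl⟩
  refine hz (h.mem_range (a := y) ?_)
  rw [h.isSemidist.comm]
  exact (show D z (ι y) < 1 from hlt).ne_top

end IsIsolatedIsometry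

/-! ### Feller kernels and kernels reflecting tightness -/

section Kernels

variable {U V W Y : Type*} [MeasurableSpace U] [MeasurableSpace V] [MeasurableSpace W]
  [MeasurableSpace Y]

/-- The values of a Markov kernel as elements of the space of probability measures. -/
def markovLaw (κ : Kernel Y W) [IsMarkovKernel κ] (y : Y) : ProbabilityMeasure W :=
  ⟨κ y, inferInstance⟩

lemma measurable_markovLaw (κ : Kernel Y W) [IsMarkovKernel κ] : Measurable (markovLaw κ) :=
  κ.measurable.subtype_mk

/-- The tautological kernel on `𝒫(Y)`. For a law `m` of random measures, `evalKernel Y ∘ₘ m` is the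
intensity (barycenter) of `m`. -/
def evalKernel (Y : Type*) [MeasurableSpace Y] : Kernel (ProbabilityMeasure Y) Y :=
  ⟨fun μ => μ, measurable_subtype_coe⟩

instance : IsMarkovKernel (evalKernel Y) := ⟨fun μ => μ.2⟩

lemma mul_measure_le_evalKernel_comp (m : Measure (ProbabilityMeasure Y)) {s : Set Y}
    (hs : MeasurableSet s) (v : ℝ≥0∞) :
    v * m {μ | v ≤ (μ : Measure Y) s} ≤ (evalKernel Y ∘ₘ m) s :=
  (mul_meas_ge_le_lintegral ((evalKernel Y).measurable_coe hs) v).trans_eq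
    (Measure.bind_apply hs (evalKernel Y).aemeasurable).symm

lemma fst_parallelComp_comp (κ : Kernel Y W) [IsMarkovKernel κ] (η : Kernel V U)
    [IsMarkovKernel η] (μ : Measure (Y × V)) : ((κ ∥ₖ η) ∘ₘ μ).fst = κ ∘ₘ μ.fst := by
  have hker : (κ ∥ₖ η).map Prod.fst = κ ∘ₖ Kernel.deterministic Prod.fst measurable_fst := by
    ext z : 1
    rw [Kernel.map_apply _ measurable_fst, Kernel.parallelComp_apply, Measure.map_fst_prod,
      measure_univ, one_smul, Kernel.comp_deterministic_eq_comap, Kernel.comap_apply]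
  rw [Measure.fst, Measure.map_comp _ _ measurable_fst, hker, ← Measure.comp_assoc,
    Measure.deterministic_comp_eq_map, Measure.fst]

lemma snd_parallelComp_comp (κ : Kernel Y W) [IsMarkovKernel κ] (η : Kernel V U)
    [IsMarkovKernel η] (μ : Measure (Y × V)) : ((κ ∥ₖ η) ∘ₘ μ).snd = η ∘ₘ μ.snd := by
  have hker : (κ ∥ₖ η).map Prod.snd = η ∘ₖ Kernel.deterministic Prod.snd measurable_snd := by
    ext z : 1
    rw [Kernel.map_apply _ measurable_snd, Kernel.parallelComp_apply, Measure.map_snd_prod,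
      measure_univ, one_smul, Kernel.comp_deterministic_eq_comap, Kernel.comap_apply]
  rw [Measure.snd, Measure.map_comp _ _ measurable_snd, hker, ← Measure.comp_assoc,
    Measure.deterministic_comp_eq_map, Measure.snd]

variable [TopologicalSpace U] [TopologicalSpace V] [TopologicalSpace W] [TopologicalSpace Y]

/-- A Markov kernel is Feller if it is continuous for the weak topology on its values. -/
def IsFeller [OpensMeasurableSpace W] (κ : Kernel Y W) [IsMarkovKernel κ] : Prop :=
  Continuous (markovLaw κ)

/-- Sets of measures whose images under `κ` are tight are tight. -/
def ReflectsTightness (κ : Kernel Y W) : Prop :=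
  ∀ M : Set (Measure Y), IsTightMeasureSet ((fun μ => κ ∘ₘ μ) '' M) → IsTightMeasureSet M

section IsFeller

variable [OpensMeasurableSpace W]

lemma isFeller_evalKernel [OpensMeasurableSpace Y] : IsFeller (evalKernel Y) := continuous_id

lemma isFeller_deterministic {f : Y → W} (hf : Continuous f) (hfm : Measurable f) :
    IsFeller (Kernel.deterministic f hfm) :=
  continuous_diracProba.comp hf

lemma IsFeller.continuous_integral {κ : Kernel Y W} [IsMarkovKernel κ] (hκ : IsFeller κ)
    (f : BoundedContinuousFunction W ℝ) : Continuous fun y => ∫ w, f w ∂κ y :=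
  (ProbabilityMeasure.continuous_integral_boundedContinuousFunction f).comp hκ

lemma IsFeller.comp [OpensMeasurableSpace Y] {κ : Kernel Y W} [IsMarkovKernel κ]
    {η : Kernel V Y} [IsMarkovKernel η] (hκ : IsFeller κ) (hη : IsFeller η) :
    IsFeller (κ ∘ₖ η) := by
  refine continuous_iff_continuousAt.2 fun v =>
    ProbabilityMeasure.tendsto_iff_forall_integral_tendsto.2 fun f => ?_
  let F : BoundedContinuousFunction Y ℝ := .ofNormedAddCommGroup (fun y => ∫ w, f w ∂κ y)
    (hκ.continuous_integral f) ‖f‖ fun y => by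
      simpa using norm_integral_le_of_norm_le_const (μ := κ y)
        (ae_of_all _ f.norm_coe_le_norm)
  have hF (v' : V) : ∫ w, f w ∂(κ ∘ₖ η) v' = ∫ y, F y ∂η v' :=
    Kernel.integral_comp (f.integrable _)
  change Tendsto (fun v' => ∫ w, f w ∂(κ ∘ₖ η) v') (𝓝 v) (𝓝 (∫ w, f w ∂(κ ∘ₖ η) v))
  simp only [hF]
  exact (hη.continuous_integral F).tendsto v

lemma IsFeller.parallelComp [OpensMeasurableSpace U] [SecondCountableTopology W]
    [SecondCountableTopology U]
    [TopologicalSpace.PseudoMetrizableSpace W] [TopologicalSpace.PseudoMetrizableSpace U]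
    {κ : Kernel Y W} [IsMarkovKernel κ] {η : Kernel V U} [IsMarkovKernel η]
    (hκ : IsFeller κ) (hη : IsFeller η) : IsFeller (κ ∥ₖ η) := by
  have hprod : markovLaw (κ ∥ₖ η) = fun z => (markovLaw κ z.1).prod (markovLaw η z.2) :=
    funext fun z => Subtype.ext (Kernel.parallelComp_apply κ η z)
  rw [IsFeller, hprod]
  exact ProbabilityMeasure.continuous_prod.comp
    ((Continuous.comp hκ continuous_fst).prodMk (Continuous.comp hη continuous_snd))

end IsFeller

namespace ReflectsTightness

lemma comp {κ : Kernel Y W} {η : Kernel V Y} (hκ : ReflectsTightness κ)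
    (hη : ReflectsTightness η) : ReflectsTightness (κ ∘ₖ η) := fun M hM =>
  hη M (hκ _ (by simpa only [Set.image_image, Measure.comp_assoc] using hM))

lemma deterministic [BorelSpace Y] [T2Space Y] [OpensMeasurableSpace W] {f : Y → W} {g : W → Y}
    (hf : Measurable f) (hg : Continuous g) (hgf : Function.LeftInverse g f) :
    ReflectsTightness (Kernel.deterministic f hf) := fun M hM => by
  have hmap (μ : Measure Y) : (Kernel.deterministic f hf ∘ₘ μ).map g = μ := by
    rw [Measure.deterministic_comp_eq_map, Measure.map_map hg.measurable hf, hgf.comp_eq_id,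
      Measure.map_id]
  simpa only [Set.image_image, hmap, Set.image_id'] using hM.map hg

lemma parallelComp {κ : Kernel Y W} [IsMarkovKernel κ] {η : Kernel V U} [IsMarkovKernel η]
    [OpensMeasurableSpace W] [OpensMeasurableSpace U] [T2Space W] [T2Space U]
    (hκ : ReflectsTightness κ) (hη : ReflectsTightness η) : ReflectsTightness (κ ∥ₖ η) := by
  intro M hM
  refine .prodMk (hκ _ ?_) (hη _ ?_)
  · have hfst := hM.map continuous_fst
    simp only [Set.image_image, ← fst_parallelComp_comp κ η] at hfst ⊢
    exact hfst
  · have hsnd := hM.map continuous_snd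
    simp only [Set.image_image, ← snd_parallelComp_comp κ η] at hsnd ⊢
    exact hsnd

end ReflectsTightness

lemma reflectsTightness_evalKernel [TopologicalSpace.MetrizableSpace Y] [BorelSpace Y] :
    ReflectsTightness (evalKernel Y) := by
  intro M hM
  rw [isTightMeasureSet_iff_exists_isCompact_measure_compl_le] at hM ⊢
  intro ε hε
  obtain ⟨δ, hδ0, hδ⟩ := ENNReal.exists_pos_sum_of_countable' hε.ne' ℕ
  let v : ℕ → NNReal := fun n => 1 / ((n : NNReal) + 1)
  have hv : Tendsto v atTop (𝓝 0) := tendsto_one_div_add_atTop_nhds_zero_nat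
  have hv0 (n : ℕ) : (v n : ℝ≥0∞) ≠ 0 := by simp [v]
  have hK (n : ℕ) : ∃ K : Set Y, IsCompact K ∧ ∀ m ∈ M, (evalKernel Y ∘ₘ m) Kᶜ ≤ v n * δ n := by
    simpa using hM (v n * δ n) (ENNReal.mul_pos (hv0 n) (hδ0 n).ne')
  choose K hK hKM using hK
  let _ := TopologicalSpace.metrizableSpaceMetric Y
  refine ⟨{μ | ∀ n, μ (K n)ᶜ ≤ v n},
    isCompact_setOfPred_probabilityMeasure_mass_eq_compl_isCompact_le hv hK (Or.inl inferInstance),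
    fun m hm => ?_⟩
  have hlarge (n : ℕ) : m {μ | v n ≤ (μ : Measure Y) (K n)ᶜ} ≤ δ n :=
    (ENNReal.mul_le_mul_iff_right (hv0 n) ENNReal.coe_ne_top).1 <|
      (mul_measure_le_evalKernel_comp m (hK n).measurableSet.compl _).trans (hKM n m hm)
  have hsub : {μ : ProbabilityMeasure Y | ∀ n, μ (K n)ᶜ ≤ v n}ᶜ ⊆
      ⋃ n, {μ : ProbabilityMeasure Y | v n ≤ (μ : Measure Y) (K n)ᶜ} := by
    intro μ hμ
    obtain ⟨n, hn⟩ : ∃ n, v n < μ (K n)ᶜ := by simpa using hμ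
    refine Set.mem_iUnion.2 ⟨n, ?_⟩
    rw [Set.mem_ofPred_eq, ← ProbabilityMeasure.ennreal_coeFn_eq_coeFn_toMeasure]
    exact_mod_cast hn.le
  calc
    _ ≤ ∑' n, m {μ | v n ≤ (μ : Measure Y) (K n)ᶜ} :=
      (measure_mono hsub).trans (measure_iUnion_le _)
    _ ≤ ∑' n, δ n := ENNReal.tsum_le_tsum hlarge
    _ ≤ ε := hδ.le

end Kernels

/-! ### Conditional laws -/

section MapCondLaw

variable {E W H : Type*} [MeasurableSpace E] [MeasurableSpace.CountablyGenerated E]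
  [MeasurableSpace W] [StandardBorelSpace W] [Nonempty W] [MeasurableSpace H]
  {n : ProbabilityMeasure W → H}

/-- For a measurable parameter `n` of laws on `W`, `mapCondLaw hn` sends the law of `(x, w)` to the
law of `(x, n (L(w | x)))`. The conditional law is chosen jointly measurably in `x` and in the law
of `(x, w)`. -/
def mapCondLaw (hn : Measurable n) : ProbabilityMeasure (E × W) → ProbabilityMeasure (E × H) :=
  let κ := (evalKernel (E × W)).condKernel
  markovLaw ((evalKernel (E × W)).fst ⊗ₖ
    Kernel.deterministic (n ∘ markovLaw κ) (hn.comp (measurable_markovLaw κ)))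

lemma measurable_mapCondLaw (hn : Measurable n) : Measurable (mapCondLaw (E := E) hn) :=
  measurable_markovLaw _

lemma coe_mapCondLaw (hn : Measurable n) (μ : ProbabilityMeasure (E × W)) :
    (mapCondLaw hn μ : Measure (E × H)) = (μ : Measure (E × W)).fst ⊗ₘ
      Kernel.deterministic (fun x => n (markovLaw (evalKernel (E × W)).condKernel (μ, x)))
        (hn.comp ((measurable_markovLaw _).comp measurable_prodMk_left)) := by
  refine (Kernel.compProd_apply_eq_compProd_sectR _ _ μ).trans ?_
  rw [Kernel.fst_apply]
  rfl

lemma condK_ae_eq_condKernel_evalKernel (μ : ProbabilityMeasure (E × W)) :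
    condK (μ : Measure (E × W)) =ᵐ[(μ : Measure (E × W)).fst]
      fun x => (evalKernel (E × W)).condKernel (μ, x) := by
  have h := Kernel.condKernel_apply_eq_condKernel (evalKernel (E × W)) μ
  rw [Kernel.fst_apply] at h
  filter_upwards [h] with x hx
  rw [condK, dif_pos (inferInstance : IsFiniteMeasure (μ : Measure (E × W)))]
  exact hx.symm

lemma map_mapCondLaw {Z : Type*} [MeasurableSpace Z] (hn : Measurable n) {f : H → Z}
    (hf : Measurable f) {g : Measure W → Z}
    (hg : ∀ ν : ProbabilityMeasure W, f (n ν) = g ν) (μ : ProbabilityMeasure (E × W)) :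
    (mapCondLaw hn μ : Measure (E × H)).map (Prod.map id f) =
      (μ : Measure (E × W)).fst.map fun x => (x, g (condK (μ : Measure (E × W)) x)) := by
  have hm : Measurable fun x => n (markovLaw (evalKernel (E × W)).condKernel (μ, x)) :=
    hn.comp ((measurable_markovLaw _).comp measurable_prodMk_left)
  rw [coe_mapCondLaw, Measure.compProd_deterministic,
    Measure.map_map (measurable_id.prodMap hf) (measurable_id'.prodMk hm)]
  refine Measure.map_congr ?_
  filter_upwards [condK_ae_eq_condKernel_evalKernel μ] with x hx
  simp only [Function.comp_apply, Prod.map_apply, id, hg, hx]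
  rfl

lemma parallelComp_comp_mapCondLaw (hn : Measurable n) {κ : Kernel H W} [IsSFiniteKernel κ]
    (hκ : ∀ ν : ProbabilityMeasure W, κ (n ν) = ν) (μ : ProbabilityMeasure (E × W)) :
    (Kernel.id ∥ₖ κ) ∘ₘ (mapCondLaw hn μ : Measure (E × H)) = (μ : Measure (E × W)) := by
  rw [coe_mapCondLaw, Measure.parallelComp_comp_compProd]
  have hdis := congrArg (· μ) ((evalKernel (E × W)).disintegrate (evalKernel (E × W)).condKernel)
  simp only [Kernel.compProd_apply_eq_compProd_sectR, Kernel.fst_apply] at hdis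
  refine Eq.trans ?_ hdis
  congr 1
  ext x : 1
  rw [Kernel.comp_deterministic_eq_comap, Kernel.comap_apply, hκ]
  rfl

end MapCondLaw

/-! ### Models of the nested spaces -/

/-- The space `Z` of nested distributions, with distance `D`, is not separable a priori and carries
a σ-algebra that need not be Borel, so it is accessed through a model: a well-behaved space embedded
in `Z` as an isolated isometric copy, whose laws are parametrized by the laws on the path space `W`
through `lift`. The map `NM` is the nested-distribution map, and `intensity` undoes `lift`. -/
structure NestedModel {W Z : Type*} [TopologicalSpace W] [MeasurableSpace W]
    [OpensMeasurableSpace W] [MeasurableSpace Z] (D : Z → Z → ℝ≥0∞) (NM : Measure W → Measure Z)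
    where
  Space : Type
  [topologicalSpace : TopologicalSpace Space]
  [measurableSpace : MeasurableSpace Space]
  [borelSpace : BorelSpace Space]
  [standardBorelSpace : StandardBorelSpace Space]
  [secondCountableTopology : SecondCountableTopology Space]
  [metrizableSpace : TopologicalSpace.MetrizableSpace Space]
  [nonempty : Nonempty Space]
  dist : Space → Space → ℝ≥0∞
  isBoundedMetrization_dist : IsBoundedMetrization dist
  toNested : Space → Z
  measurableEmbedding_toNested : MeasurableEmbedding toNested
  isIsolatedIsometry_toNested : IsIsolatedIsometry toNested dist D
  intensity : Kernel Space W
  [isMarkovKernel_intensity : IsMarkovKernel intensity]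
  isFeller_intensity : IsFeller intensity
  reflectsTightness_intensity : ReflectsTightness intensity
  lift : ProbabilityMeasure W → ProbabilityMeasure Space
  measurable_lift : Measurable lift
  map_toNested_lift : ∀ μ, (lift μ : Measure Space).map toNested = NM μ
  intensity_comp_lift : ∀ μ, intensity ∘ₘ (lift μ : Measure Space) = μ

namespace NestedModel

attribute [instance] topologicalSpace measurableSpace borelSpace standardBorelSpace
  secondCountableTopology metrizableSpace nonempty isMarkovKernel_intensity

lemma intensity_comp_evalKernel_lift {W Z : Type*} [TopologicalSpace W] [MeasurableSpace W]
    [OpensMeasurableSpace W] [MeasurableSpace Z] {D : Z → Z → ℝ≥0∞} {NM : Measure W → Measure Z}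
    (M : NestedModel D NM) (μ : ProbabilityMeasure W) :
    (M.intensity ∘ₖ evalKernel M.Space) (M.lift μ) = μ :=
  (Kernel.comp_apply _ _ _).trans (M.intensity_comp_lift μ)

variable {p : ℝ} {E : Type} [TopologicalSpace E] [PolishSpace E] [MeasurableSpace E] [BorelSpace E]
  {V : Type*} [TopologicalSpace V] [MeasurableSpace V] [BorelSpace V] {dE : E → E → ℝ≥0∞}

/-- The model for one time step: the path space is homeomorphic to the state space. -/
def ofHomeomorph [Nonempty E] (hdE : IsBoundedMetrization dE) (c : E ≃ₜ V)
    {NM : Measure V → Measure E} (hNM : ∀ μ, NM μ = μ.map c.symm) : NestedModel dE NM where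
  Space := E
  dist := dE
  isBoundedMetrization_dist := hdE
  toNested := id
  measurableEmbedding_toNested := .id
  isIsolatedIsometry_toNested := ⟨hdE.toIsSemidist, fun _ _ => rfl, fun _ => Set.mem_range_self _⟩
  intensity := Kernel.deterministic c c.measurable
  isFeller_intensity := isFeller_deterministic c.continuous _
  reflectsTightness_intensity := .deterministic _ c.symm.continuous c.left_inv
  lift μ := μ.map c.symm.measurable.aemeasurable
  measurable_lift := ((Measure.measurable_map _ c.symm.measurable).comp
    measurable_subtype_coe).subtype_mk
  map_toNested_lift μ := Measure.map_id.trans (hNM μ).symm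
  intensity_comp_lift μ := by
    rw [Measure.deterministic_comp_eq_map]
    simp [Measure.map_map c.measurable c.symm.measurable]

/-- Prepending one time step to a model. A point of the new space is a state together with the law
of a point of the old one. -/
def cons {W Z : Type*} [TopologicalSpace W] [PolishSpace W] [MeasurableSpace W] [BorelSpace W]
    [Nonempty W] [MeasurableSpace Z] {D : Z → Z → ℝ≥0∞} {NM : Measure W → Measure Z}
    (M : NestedModel D NM) [Nonempty E] (hp : 1 ≤ p) (hdE : IsBoundedMetrization dE)
    (c : E × W ≃ₜ V) {NM' : Measure V → Measure (E × Measure Z)}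
    (hNM' : ∀ μ, NM' μ = (μ.map c.symm).fst.map fun x => (x, NM (condK (μ.map c.symm) x))) :
    NestedModel (prodDist p dE (Wp p D)) NM' where
  Space := E × ProbabilityMeasure M.Space
  nonempty := have : Nonempty (ProbabilityMeasure M.Space) := ⟨diracProba (Classical.arbitrary _)⟩
    inferInstance
  dist := prodDist p dE fun μ ν => Wp p M.dist (μ : Measure M.Space) ν
  isBoundedMetrization_dist := hdE.prodDist hp (M.isBoundedMetrization_dist.wp hp)
  toNested := Prod.map id fun μ => (μ : Measure M.Space).map M.toNested
  measurableEmbedding_toNested := MeasurableEmbedding.id.prodMap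
    ((measurableEmbedding_measure_map M.measurableEmbedding_toNested).comp
      measurableEmbedding_probabilityMeasure_coe)
  isIsolatedIsometry_toNested := (M.isIsolatedIsometry_toNested.wp M.measurableEmbedding_toNested
    (by positivity)).prodDist (by positivity) hdE.toIsSemidist
  intensity := Kernel.deterministic c c.measurable ∘ₖ
    (Kernel.id ∥ₖ (M.intensity ∘ₖ evalKernel M.Space))
  isFeller_intensity := (isFeller_deterministic c.continuous _).comp <|
    (isFeller_deterministic continuous_id measurable_id).parallelComp
      (M.isFeller_intensity.comp isFeller_evalKernel)
  reflectsTightness_intensity :=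
    (ReflectsTightness.deterministic _ c.symm.continuous c.left_inv).comp <|
      (ReflectsTightness.deterministic measurable_id continuous_id fun _ => rfl).parallelComp
        (M.reflectsTightness_intensity.comp reflectsTightness_evalKernel)
  lift μ := mapCondLaw M.measurable_lift (μ.map c.symm.measurable.aemeasurable)
  measurable_lift := (measurable_mapCondLaw _).comp ((Measure.measurable_map _
    c.symm.measurable).comp measurable_subtype_coe).subtype_mk
  map_toNested_lift μ := by
    rw [hNM']
    exact map_mapCondLaw _ ((Measure.measurable_map _
      M.measurableEmbedding_toNested.measurable).comp measurable_subtype_coe) M.map_toNested_lift _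
  intensity_comp_lift μ := by
    rw [← Measure.comp_assoc, parallelComp_comp_mapCondLaw _ M.intensity_comp_evalKernel_lift,
      Measure.deterministic_comp_eq_map]
    simp [Measure.map_map c.measurable c.symm.measurable]

section Compactness

variable {W Z : Type*} [TopologicalSpace W] [PolishSpace W] [MeasurableSpace W] [BorelSpace W]
  [MeasurableSpace Z] {D : Z → Z → ℝ≥0∞} {NM : Measure W → Measure Z}

lemma isCompact_closure_lift_image_iff (M : NestedModel D NM) (A : Set (ProbabilityMeasure W)) :
    IsCompact (closure (M.lift '' A)) ↔ IsCompact (closure A) := by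
  refine ⟨fun h => ?_, fun h => ?_⟩
  · have hcont := M.isFeller_intensity.comp isFeller_evalKernel
    refine (h.image hcont).closure_of_subset fun μ hμ => ?_
    exact ⟨M.lift μ, subset_closure ⟨μ, hμ, rfl⟩,
      Subtype.ext (M.intensity_comp_evalKernel_lift μ)⟩
  · let _ := TopologicalSpace.upgradeIsCompletelyMetrizable W
    refine isCompact_closure_of_isTightMeasureSet (M.reflectsTightness_intensity _ ?_)
    refine (isTightMeasureSet_of_isCompact_closure h).subset ?_
    rintro _ ⟨_, ⟨_, ⟨μ, hμ, rfl⟩, rfl⟩, rfl⟩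
    exact ⟨μ, hμ, (M.intensity_comp_lift μ).symm⟩

theorem isCompact_closure_image_iff (M : NestedModel D NM) (hp : 1 ≤ p)
    (A : Set (ProbabilityMeasure W)) :
    let PZ := {m : Measure Z // IsProbabilityMeasure m}
    let _ : TopologicalSpace PZ := ballTop fun m m' => Wp p D m.1 m'.1
    IsCompact (closure A) ↔ IsCompact (closure {m : PZ | ∃ μ ∈ A, m.1 = NM μ}) := by
  intro PZ _
  have hprob (μ : ProbabilityMeasure M.Space) :
      IsProbabilityMeasure ((μ : Measure M.Space).map M.toNested) :=
    Measure.isProbabilityMeasure_map M.measurableEmbedding_toNested.measurable.aemeasurable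
  let Φ : ProbabilityMeasure M.Space → PZ := fun μ =>
    ⟨(μ : Measure M.Space).map M.toNested, hprob μ⟩
  have hΦ : IsClosedEmbedding Φ :=
    ((M.isIsolatedIsometry_toNested.wp M.measurableEmbedding_toNested
      (by positivity)).codRestrict hprob).isClosedEmbedding (M.isBoundedMetrization_dist.wp hp)
  have himage : {m : PZ | ∃ μ ∈ A, m.1 = NM μ} = Φ '' (M.lift '' A) := by
    ext m
    rw [Set.image_image]
    refine exists_congr fun μ => and_congr_right fun _ => ?_
    rw [← M.map_toNested_lift μ, eq_comm]
    exact ⟨fun h => Subtype.ext h, congrArg Subtype.val⟩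
  rw [himage, hΦ.closure_image_eq, ← hΦ.isEmbedding.isCompact_iff,
    M.isCompact_closure_lift_image_iff]

end Compactness

end NestedModel

section PathSpace

variable {E : Type} [TopologicalSpace E] [PolishSpace E] [MeasurableSpace E] [BorelSpace E]
  [Nonempty E] {d : E → E → ℝ≥0∞} {p : ℝ}

/-- The homeomorphism which prepends a state to a path. -/
def consHomeomorph (E : Type*) [TopologicalSpace E] (k : ℕ) :
    E × (Fin k → E) ≃ₜ (Fin (k + 1) → E) where
  toEquiv := Fin.consEquiv fun _ => E
  continuous_toFun := by
    change Continuous fun x : E × (Fin k → E) => Fin.cons (α := fun _ => E) x.1 x.2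
    fun_prop
  continuous_invFun := by
    change Continuous fun x : Fin (k + 1) → E => (x 0, Fin.tail x)
    fun_prop

/-- The model of the nested space `𝒳₁` for `k + 1` time steps. -/
def nestedModel (hd : IsBoundedMetrization d) (hp : 1 ≤ p) :
    (k : ℕ) → @NestedModel (Fin (k + 1) → E) (nest E ‹_› d p k).carrier _ _ _
      (nest E ‹_› d p k).inst (nest E ‹_› d p k).dist (NMap E d p k)
  | 0 => .ofHomeomorph hd (Homeomorph.funUnique (Fin 1) E).symm fun _ => rfl
  | k + 1 =>
    let _ := (nest E ‹_› d p k).inst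
    (nestedModel hd hp k).cons hp hd (consHomeomorph E (k + 1)) fun μ => by
      rw [Measure.fst, Measure.map_map measurable_fst (consHomeomorph E (k + 1)).symm.measurable]
      rfl

theorem compactness_lemma_general (hd : IsBoundedMetrization d) (hp : 1 ≤ p) (k : ℕ)
    (A : Set (ProbabilityMeasure (Fin (k + 1) → E))) :
    let Q := nest E ‹MeasurableSpace E› d p k
    let PQ := {m : @Measure Q.carrier Q.inst // @IsProbabilityMeasure Q.carrier Q.inst m}
    let τQ : TopologicalSpace PQ := ballTop fun m m' => @Wp Q.carrier Q.inst p Q.dist m.1 m'.1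
    IsCompact (closure A) ↔ @IsCompact PQ τQ (@closure PQ τQ
      {m : PQ | ∃ μ ∈ A, m.1 = NMap E d p k μ.toMeasure}) :=
  let _ := (nest E ‹_› d p k).inst
  (nestedModel hd hp k).isCompact_closure_image_iff hp A

end PathSpace

/-- **Compactness lemma.**  For bounded `ρ`, a set `A ⊆ 𝒫(X̄)` is relatively
compact for the weak topology iff `𝒩[A] ⊆ 𝒫(𝒳_1)` is relatively compact for the
nested Wasserstein distance `𝒲_{D_1,p}`.  Here `N = k + 1`. -/
theorem compactness_lemma
    {X : Type} [MetricSpace X] [CompleteSpace X] [SecondCountableTopology X]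
    [MeasurableSpace X] [BorelSpace X] [Nonempty X]
    (hbdd : EMetric.diam (Set.univ : Set X) ≠ ∞)
    (p : ℝ) (hp : 1 ≤ p) (k : ℕ)
    (A : Set (ProbabilityMeasure (Fin (k + 1) → X))) :
    let d : X → X → ℝ≥0∞ := edist
    let Q := nest X ‹MeasurableSpace X› d p k
    let dW := @Wp Q.carrier Q.inst p Q.dist
    let PQ := {m : @Measure Q.carrier Q.inst // @IsProbabilityMeasure Q.carrier Q.inst m}
    let τQ : TopologicalSpace PQ := ballTop (fun m m' => dW m.1 m'.1)
    (IsCompact (closure A) ↔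
      @IsCompact PQ τQ (@closure PQ τQ
        {m : PQ | ∃ μ ∈ A, m.1 = NMap X d p k μ.toMeasure})) :=
  compactness_lemma_general (isBoundedMetrization_edist hbdd fun x y =>
    Metric.edist_le_ediam_of_mem (Set.mem_univ x) (Set.mem_univ y)) hp k A

end AWPaper
end
end
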